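/- A monic Littlewood polynomial P of degree at most 12 divides some Newman polynomial and is not a product of cyclotomic polynomials if and only if P is one of the following nine polynomials: P₁ = X^6+X^5−X^4−X^3−X^2+X+1; P₂ = X^7+X^6−X^5+X^4+X^3−X^2+X+1; P₃ = X^8+X^7−X^6−X^5+X^4−X^3−X^2+X+1; P₄ = X^9+X^8+X^7−X^6−X^5−X^4−X^3+X^2+X+1; P₅ = X^10−X^9+X^8+X^7−X^6+X^5−X^4+X^3+X^2−X+1; P₆ = X^10+X^9+X^8−X^7−X^6−X^5−X^4−X^3+X^2+X+1; P₇ = X^12+X^11−X^10−X^9−X^8+X^7+X^6+X^5−X^4−X^3−X^2+X+1; P₈ = X^12−X^11+X^10+X^9−X^8+X^7+X^6+X^5−X^4+X^3+X^2−X+1; P₉ = X^12+X^11+X^10−X^9−X^8−X^7+X^6−X^5−X^4−X^3+X^2+X+1. -/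

import Mathlib

open Polynomial

set_option maxHeartbeats 1000000

/-- A Newman polynomial: an integer polynomial with all coefficients `0` or `1`
and constant term `1`. -/
def IsNewman (P : Polynomial ℤ) : Prop :=
  P.coeff 0 = 1 ∧ ∀ i, P.coeff i = 0 ∨ P.coeff i = 1

/-- A Littlewood polynomial: a nonzero integer polynomial all of whose
coefficients (up to its degree) are `-1` or `1`. -/
def IsLittlewood (P : Polynomial ℤ) : Prop :=
  P ≠ 0 ∧ ∀ i ≤ P.natDegree, P.coeff i = 1 ∨ P.coeff i = -1

/-- A product of cyclotomic polynomials `Φ_n`, `n ≥ 1` (possibly empty). -/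
def IsCyclotomicProduct (P : Polynomial ℤ) : Prop :=
  ∃ l : List ℕ, (∀ n ∈ l, 1 ≤ n) ∧ P = (l.map fun n => cyclotomic n ℤ).prod

/-!
A Newman multiple of `P` can be divided by `P` from the lowest coefficient upwards. After each
step the current remainder plus a polynomial with coefficients `0` and `1` is a multiple of `P`. At
a root of `P` in the open unit disc, a weighted Cauchy–Schwarz inequality bounds the values of the
latter, so that remainders with a large value there are impossible. When the remainders that survive
this test are finitely many and none of them is zero, `P` has no Newman multiple.

Newman polynomials are at least `1` on the nonnegative reals, which excludes the monic `P` with a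
nonpositive value at `0` or at `1`. Reversing the coefficients preserves Newman polynomials and
halves the number of the remaining `P`. Each of them is then excluded by the division, or is a
product of cyclotomic polynomials because it divides `(X ^ n - 1) ^ 2`, or is one of nine
exceptions. The exceptions have explicit Newman multiples, and a root inside the unit disc shows
that they are not products of cyclotomic polynomials.
-/

theorem IsNewman.one_le_aeval {N : ℤ[X]} (hN : IsNewman N) {t : ℝ} (ht : 0 ≤ t) :
    1 ≤ aeval t N := by
  rw [aeval_eq_sum_range, Finset.sum_range_succ']
  have : 0 ≤ ∑ i ∈ Finset.range N.natDegree, N.coeff (i + 1) • t ^ (i + 1) := by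
    refine Finset.sum_nonneg fun i _ => ?_
    rcases hN.2 (i + 1) with h | h <;> rw [h] <;> simp [pow_nonneg ht]
  simpa [hN.1] using this

theorem IsNewman.reverse {N : ℤ[X]} (hN : IsNewman N) : IsNewman N.reverse := by
  refine ⟨?_, fun i => by rw [coeff_reverse]; exact hN.2 _⟩
  rw [coeff_zero_reverse]
  refine (hN.2 N.natDegree).resolve_left fun h => ?_
  have : N = 0 := leadingCoeff_eq_zero.mp h
  simpa [this] using hN.1

theorem isCyclotomicProduct_X_pow_sub_one {n : ℕ} (hn : 0 < n) :
    IsCyclotomicProduct (X ^ n - 1) := by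
  refine ⟨n.divisors.toList, fun d hd => Nat.pos_of_mem_divisors (Finset.mem_toList.mp hd), ?_⟩
  rw [Finset.prod_map_toList, prod_cyclotomic_eq_X_pow_sub_one hn]

namespace IsCyclotomicProduct

theorem mul {P Q : ℤ[X]} (hP : IsCyclotomicProduct P) (hQ : IsCyclotomicProduct Q) :
    IsCyclotomicProduct (P * Q) := by
  obtain ⟨l, hl, rfl⟩ := hP
  obtain ⟨m, hm, rfl⟩ := hQ
  exact ⟨l ++ m, fun n hn => (List.mem_append.mp hn).elim (hl n) (hm n), by simp⟩

theorem of_dvd {P Q : ℤ[X]} (hQ : IsCyclotomicProduct Q) (hP : P.Monic) (h : P ∣ Q) :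
    IsCyclotomicProduct P := by
  obtain ⟨l, hl, rfl⟩ := hQ
  induction l generalizing P with
  | nil => exact ⟨[], by simp, by simpa using hP.eq_one_of_isUnit (isUnit_of_dvd_one h)⟩
  | cons n l ih =>
    simp only [List.mem_cons, forall_eq_or_imp] at hl
    rw [List.map_cons, List.prod_cons] at h
    by_cases hn : cyclotomic n ℤ ∣ P
    · obtain ⟨P', rfl⟩ := hn
      have hP' : P'.Monic := (cyclotomic.monic n ℤ).of_mul_monic_left hP
      obtain ⟨m, hm, rfl⟩ := ih hP' hl.2 ((mul_dvd_mul_iff_left (cyclotomic_ne_zero n ℤ)).mp h)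
      exact ⟨n :: m, by simpa using ⟨hl.1, hm⟩, by simp⟩
    · have hrel : IsRelPrime (cyclotomic n ℤ) P :=
        (cyclotomic.irreducible hl.1).isRelPrime_iff_not_dvd.mpr hn
      exact ih hP hl.2 (hrel.symm.dvd_of_dvd_mul_left h)

theorem norm_eq_one {P : ℤ[X]} (hP : IsCyclotomicProduct P) {α : ℂ} (hα : aeval α P = 0) :
    ‖α‖ = 1 := by
  obtain ⟨l, hl, rfl⟩ := hP
  rw [map_list_prod, List.prod_eq_zero_iff, List.map_map, List.mem_map] at hα
  obtain ⟨n, hn, h⟩ := hα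
  have hroot : aeval α (X ^ n - 1 : ℤ[X]) = 0 :=
    aeval_eq_zero_of_dvd_aeval_eq_zero (cyclotomic.dvd_X_pow_sub_one n ℤ) h
  refine Complex.norm_eq_one_of_pow_eq_one (n := n) ?_ (Nat.one_le_iff_ne_zero.mp (hl n hn))
  simpa [sub_eq_zero] using hroot

end IsCyclotomicProduct

namespace LittlewoodNewman

local notation "ℤ[i]" => GaussianInt

section CoefficientLists

variable {R : Type*} [CommRing R]

/-- The polynomial with the given list of coefficients, lowest degree first. -/
noncomputable def ofList : List R → R[X]
  | [] => 0
  | a :: l => C a + X * ofList l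

theorem coeff_ofList (l : List R) (i : ℕ) : (ofList l).coeff i = l.getD i 0 := by
  induction l generalizing i with
  | nil => simp [ofList]
  | cons a l ih =>
    cases i with
    | zero => simp [ofList]
    | succ i => rw [ofList, coeff_add, coeff_C_succ, coeff_X_mul, ih, zero_add, List.getD_cons_succ]

theorem eval_one_ofList (l : List R) : (ofList l).eval 1 = l.sum := by
  induction l with
  | nil => simp [ofList]
  | cons a l ih => simp [ofList, ih]

theorem ofList_append (l m : List R) :
    ofList (l ++ m) = ofList l + X ^ l.length * ofList m := by
  induction l with
  | nil => simp [ofList]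
  | cons a l ih => simp only [List.cons_append, ofList, ih, List.length_cons]; ring

theorem ofList_replicate_zero (n : ℕ) : ofList (List.replicate n (0 : R)) = 0 := by
  induction n with
  | zero => rfl
  | succ n ih => simp [List.replicate_succ, ofList, ih]

theorem ofList_append_one (l : List R) : ofList (l ++ [1]) = X ^ l.length + ofList l := by
  rw [ofList_append]
  simp [ofList, add_comm]

theorem degree_ofList_lt (l : List R) : (ofList l).degree < l.length := by
  rw [degree_lt_iff_coeff_zero]
  intro i hi
  rw [coeff_ofList, List.getD_eq_default _ _ hi]

theorem monic_ofList_append_one (l : List R) : (ofList (l ++ [1])).Monic :=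
  ofList_append_one l ▸ monic_X_pow_add (degree_ofList_lt l)

theorem natDegree_ofList_append_one [Nontrivial R] (l : List R) :
    (ofList (l ++ [1])).natDegree = l.length := by
  rw [ofList_append_one]
  refine natDegree_eq_of_degree_eq_some ?_
  rw [degree_add_eq_left_of_degree_lt (by simpa using degree_ofList_lt l), degree_X_pow]

theorem eq_ofList (P : R[X]) : P = ofList ((List.range (P.natDegree + 1)).map P.coeff) := by
  ext i
  rw [coeff_ofList]
  by_cases hi : i < P.natDegree + 1
  · simp [hi]
  · rw [List.getD_eq_default _ _ (by simpa using hi)]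
    exact coeff_eq_zero_of_natDegree_lt (by omega)

theorem reverse_ofList_append_one [Nontrivial R] (a : R) (l : List R) :
    (ofList (a :: (l ++ [1]))).reverse = ofList (a :: (l ++ [1])).reverse := by
  ext i
  have hd : (ofList (a :: (l ++ [1]))).natDegree = l.length + 1 :=
    natDegree_ofList_append_one (a :: l)
  rw [coeff_reverse, coeff_ofList, coeff_ofList, hd]
  by_cases hi : i ≤ l.length + 1
  · rw [revAt_le hi, List.getD_eq_getElem _ _ (by simp),
      List.getD_eq_getElem _ _ (by simp; omega), List.getElem_reverse]
    congr 1
    simp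
  · rw [revAt_eq_self_of_lt (by omega), List.getD_eq_default _ _ (by simp; omega),
      List.getD_eq_default _ _ (by simp; omega)]

theorem eq_zero_of_mem_of_dvd_ofList {P : R[X]} (hP : P.Monic) {s : List R}
    (hs : s.length ≤ P.natDegree) (h : P ∣ ofList s) {c : R} (hc : c ∈ s) : c = 0 := by
  nontriviality R
  have h0 : ofList s = 0 := by
    by_contra h0
    refine hP.not_dvd_of_degree_lt h0 ((degree_ofList_lt s).trans_le ?_) h
    rw [degree_eq_natDegree hP.ne_zero]
    exact_mod_cast hs
  obtain ⟨i, hi, rfl⟩ := List.getElem_of_mem hc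
  rw [← List.getD_eq_getElem s 0 hi, ← coeff_ofList, h0, coeff_zero]

end CoefficientLists

section DivisionFromTheBottom

/-- The coefficient list of `ofList l + C a * ofList m`. -/
def addMul (a : ℤ) : List ℤ → List ℤ → List ℤ
  | l, [] => l
  | [], c :: m => a * c :: addMul a [] m
  | b :: l, c :: m => (b + a * c) :: addMul a l m

/-- One step of division by `P = ofList (1 :: q)` from the lowest coefficient upwards: `P` divides
`ofList T + ofList (c :: l)` if and only if it divides `ofList (next q c T) + ofList l`. -/
def next (q : List ℤ) (c : ℤ) : List ℤ → List ℤ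
  | [] => addMul (-c) [] q
  | t :: T => addMul (-(t + c)) T q

theorem ofList_addMul (a : ℤ) (l m : List ℤ) :
    ofList (addMul a l m) = ofList l + C a * ofList m := by
  fun_induction addMul a l m with
  | case1 => simp [ofList]
  | case2 c m ih => simp only [ofList, ih, map_mul]; ring
  | case3 b l c m ih => simp only [ofList, ih, map_mul, map_add]; ring

theorem length_addMul (a : ℤ) (l m : List ℤ) :
    (addMul a l m).length = max l.length m.length := by
  fun_induction addMul a l m <;> simp_all

theorem length_next_le {q T : List ℤ} (c : ℤ) (hT : T.length ≤ q.length) :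
    (next q c T).length ≤ q.length := by
  cases T with
  | nil => simp [next, length_addMul]
  | cons t T => simpa [next, length_addMul] using (Nat.le_succ _).trans hT

theorem X_mul_ofList_next (q : List ℤ) (c : ℤ) (T : List ℤ) : ∃ a : ℤ,
    X * ofList (next q c T) = ofList T + C c - C a * ofList (1 :: q) := by
  cases T with
  | nil => exact ⟨c, by simp only [next, ofList_addMul, ofList, map_neg, map_one]; ring⟩
  | cons t T =>
    exact ⟨t + c, by simp only [next, ofList_addMul, ofList, map_neg, map_one, map_add]; ring⟩

theorem dvd_ofList_next_iff (q : List ℤ) (c : ℤ) (T l : List ℤ) :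
    ofList (1 :: q) ∣ ofList (next q c T) + ofList l ↔
      ofList (1 :: q) ∣ ofList T + ofList (c :: l) := by
  obtain ⟨a, ha⟩ := X_mul_ofList_next q c T
  have hcoprime : IsCoprime (ofList (1 :: q)) X :=
    ⟨1, -ofList q, by simp only [ofList, map_one]; ring⟩
  calc _ ↔ ofList (1 :: q) ∣ X * (ofList (next q c T) + ofList l) :=
        ⟨fun h => h.mul_left X, hcoprime.dvd_of_dvd_mul_left⟩
    _ ↔ ofList (1 :: q) ∣ ofList T + ofList (c :: l) - C a * ofList (1 :: q) := by
        rw [mul_add, ha, sub_add_eq_add_sub, add_assoc]; rfl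
    _ ↔ _ := dvd_sub_left (dvd_mul_left _ _)

/-- Whether the division of `ofList l` by `ofList (1 :: q)` from the lowest coefficient upwards
leaves no remainder. -/
def divides (q l : List ℤ) : Bool :=
  (l.foldl (fun T c => next q c T) []).all (· == 0)

theorem ofList_eq_zero {l : List ℤ} (h : ∀ c ∈ l, c = 0) : ofList l = 0 := by
  rw [List.eq_replicate_of_mem h, ofList_replicate_zero]

theorem dvd_of_divides {q l : List ℤ} (h : divides q l) : ofList (1 :: q) ∣ ofList l := by
  have main (l T : List ℤ) (h : ∀ c ∈ l.foldl (fun T c => next q c T) T, c = 0) :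
      ofList (1 :: q) ∣ ofList T + ofList l := by
    induction l generalizing T with
    | nil => simp [ofList_eq_zero (l := T) h, ofList]
    | cons c l ih => exact (dvd_ofList_next_iff q c T l).mp (ih _ h)
  simpa [ofList] using main l [] (by simpa [divides] using h)

/-- A search, limited to `fuel` steps, for the lists reachable from those in the stack by steps
`next q 0` and `next q 1` that avoid the lists accepted by `dead`. -/
def explore (q : List ℤ) (dead : List ℤ → Bool) :
    (fuel : ℕ) → (stack visited : List (List ℤ)) → List (List ℤ)
  | 0, _, V => V
  | _ + 1, [], V => V
  | n + 1, s :: S, V => bif dead s || V.contains s then explore q dead n S V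
      else explore q dead n (next q 0 s :: next q 1 s :: S) (s :: V)

/-- Whether no list in `V` is zero, and every step `next q 0` or `next q 1` from `V` leads to `V` or
to a list accepted by `dead`. -/
def isClosed (q : List ℤ) (dead : List ℤ → Bool) (V : List (List ℤ)) : Bool :=
  V.all fun s => s.any (· != 0) && [0, 1].all fun c => dead (next q c s) || V.contains (next q c s)

variable {q : List ℤ} {dead : List ℤ → Bool}

theorem not_dvd_of_isClosed (hP : (ofList (1 :: q)).Monic)
    (hd : (ofList (1 :: q)).natDegree = q.length)
    (hdead : ∀ T, T.length ≤ q.length → dead T → ∀ l : List ℤ, (∀ c ∈ l, c = 0 ∨ c = 1) →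
      ¬ ofList (1 :: q) ∣ ofList T + ofList l)
    {V : List (List ℤ)} (hV : isClosed q dead V) {l : List ℤ} (hl : ∀ c ∈ l, c = 0 ∨ c = 1)
    {T : List ℤ} (hT : T.length ≤ q.length) (h : dead T || V.contains T) :
    ¬ ofList (1 :: q) ∣ ofList T + ofList l := by
  induction l generalizing T with
  | nil =>
    rcases Bool.or_eq_true_iff.mp h with h | h
    · exact hdead T hT h [] hl
    · intro hdvd
      obtain ⟨⟨c, hc, hc0⟩, -⟩ : (∃ c ∈ T, c ≠ 0) ∧ _ := by
        simpa using List.all_eq_true.mp hV T (by simpa using h)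
      refine hc0 (eq_zero_of_mem_of_dvd_ofList hP (hd ▸ hT) ?_ hc)
      simpa [ofList] using hdvd
  | cons c l ih =>
    rcases Bool.or_eq_true_iff.mp h with h | h
    · exact hdead T hT h (c :: l) hl
    · rw [← dvd_ofList_next_iff]
      refine ih (fun c hc => hl c (List.mem_cons_of_mem _ hc)) (length_next_le c hT) ?_
      have hstep := List.all_eq_true.mp hV T (by simpa using h)
      rw [Bool.and_eq_true, List.all_eq_true] at hstep
      exact hstep.2 c (by simpa using hl c List.mem_cons_self)

end DivisionFromTheBottom

section NewmanMultiples

/-- No Newman polynomial is a multiple of `P`. -/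
def NoNewmanMultiple (P : ℤ[X]) : Prop := ∀ N, IsNewman N → ¬ P ∣ N

theorem noNewmanMultiple_of_eval_nonpos {P : ℤ[X]} (hP : P.Monic) (hd : P.natDegree ≠ 0) {a : ℤ}
    (ha : 0 ≤ a) (h : P.eval a ≤ 0) : NoNewmanMultiple P := by
  intro N hN hdvd
  set p : ℝ[X] := P.map (Int.castRingHom ℝ) with hp
  have hmonic : p.Monic := hP.map _
  have htendsto : Filter.Tendsto (fun x => p.eval x) Filter.atTop Filter.atTop := by
    refine tendsto_atTop_of_leadingCoeff_nonneg p ?_ (by rw [hmonic.leadingCoeff]; norm_num)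
    rw [hP.degree_map, degree_eq_natDegree hP.ne_zero]
    exact_mod_cast Nat.pos_of_ne_zero hd
  obtain ⟨b, hb, hab⟩ := ((htendsto.eventually_ge_atTop 0).and
    (Filter.eventually_ge_atTop (a : ℝ))).exists
  have hpa : p.eval (a : ℝ) ≤ 0 := by
    rw [hp, eval_intCast_map, eq_intCast]
    exact_mod_cast h
  obtain ⟨t, ht, hroot⟩ := intermediate_value_Icc hab p.continuous.continuousOn ⟨hpa, hb⟩
  have hroot : aeval t P = 0 := by
    rw [← hroot, hp]
    simp [aeval_def, eval₂_eq_eval_map]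
  have hpos := hN.one_le_aeval ((Int.cast_nonneg ha).trans ht.1)
  rw [aeval_eq_zero_of_dvd_aeval_eq_zero hdvd hroot] at hpos
  linarith

theorem noNewmanMultiple_of_reverse {P : ℤ[X]} (h : NoNewmanMultiple P.reverse) :
    NoNewmanMultiple P := by
  rintro N hN ⟨Q, rfl⟩
  exact h _ hN.reverse (reverse_mul_of_domain P Q ▸ dvd_mul_right _ _)

theorem exists_eq_ofList_cons_of_isNewman {N : ℤ[X]} (hN : IsNewman N) :
    ∃ l : List ℤ, (∀ c ∈ l, c = 0 ∨ c = 1) ∧ N = ofList (1 :: l) := by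
  refine ⟨(List.range N.natDegree).map fun i => N.coeff (i + 1), ?_, ?_⟩
  · simpa using fun i _ => hN.2 (i + 1)
  · conv_lhs => rw [eq_ofList N, List.range_succ_eq_map, List.map_cons, List.map_map, hN.1]
    rfl

theorem noNewmanMultiple_of_forall_not_dvd {q : List ℤ}
    (h : ∀ l : List ℤ, (∀ c ∈ l, c = 0 ∨ c = 1) →
      ¬ ofList (1 :: q) ∣ ofList (next q 1 []) + ofList l) :
    NoNewmanMultiple (ofList (1 :: q)) := by
  intro N hN hdvd
  obtain ⟨l, hl, rfl⟩ := exists_eq_ofList_cons_of_isNewman hN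
  exact h l hl ((dvd_ofList_next_iff q 1 [] l).mpr (by simpa [ofList] using hdvd))

theorem isNewman_ofList_cons {l : List ℤ} (h : ∀ c ∈ l, c = 0 ∨ c = 1) :
    IsNewman (ofList (1 :: l)) := by
  refine ⟨by simp [coeff_ofList], fun i => ?_⟩
  rw [coeff_ofList]
  by_cases hi : i < (1 :: l).length
  · rw [List.getD_eq_getElem _ _ hi]
    rcases List.mem_cons.mp (List.getElem_mem hi) with h1 | h1
    exacts [.inr h1, h _ h1]
  · exact .inl (List.getD_eq_default _ _ (not_lt.mp hi))

end NewmanMultiples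

section CauchySchwarz

open ComplexConjugate

/-- The quadratic form `∑ k, ρ ^ (-k) * (u * α ^ k).re ^ 2` in closed form. -/
noncomputable def realPartForm (ρ : ℝ) (α u : ℂ) : ℝ :=
  (‖u‖ ^ 2 / (1 - ‖α‖ ^ 2 / ρ) + (u ^ 2 / (1 - α ^ 2 / ρ)).re) / 2

variable {ρ : ℝ} {α : ℂ}

theorem norm_sq_div_lt_one (hα : ‖α‖ ^ 2 < ρ) : ‖α ^ 2 / (ρ : ℂ)‖ < 1 := by
  have hρ : 0 < ρ := (sq_nonneg _).trans_lt hα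
  rwa [norm_div, norm_pow, Complex.norm_real, Real.norm_of_nonneg hρ.le, div_lt_one hρ]

theorem one_sub_sq_div_ne_zero (hα : ‖α‖ ^ 2 < ρ) : 1 - α ^ 2 / (ρ : ℂ) ≠ 0 := by
  intro h
  have hlt := norm_sq_div_lt_one hα
  rw [← sub_eq_zero.mp h, norm_one] at hlt
  exact hlt.false

theorem realPartForm_eq (hα : ‖α‖ ^ 2 < ρ) (u : ℂ) :
    realPartForm ρ α u = u.re ^ 2 + realPartForm ρ α (u * α) / ρ := by
  have hnorm : ‖u‖ ^ 2 / (1 - ‖α‖ ^ 2 / ρ) =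
      ‖u‖ ^ 2 + ‖u * α‖ ^ 2 / (1 - ‖α‖ ^ 2 / ρ) / ρ := by
    have hρ : ρ ≠ 0 := ((sq_nonneg _).trans_lt hα).ne'
    have hsub : ρ - ‖α‖ ^ 2 ≠ 0 := (sub_pos.mpr hα).ne'
    rw [norm_mul]
    field_simp
    ring
  have hre : (u ^ 2 / (1 - α ^ 2 / ρ)).re =
      (u ^ 2).re + ((u * α) ^ 2 / (1 - α ^ 2 / ρ)).re / ρ := by
    have hsub := one_sub_sq_div_ne_zero hα
    have hcomm : (u * α) ^ 2 / (1 - α ^ 2 / ρ) / ρ = u ^ 2 * (α ^ 2 / ρ) / (1 - α ^ 2 / ρ) := by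
      ring
    rw [← Complex.div_ofReal_re, ← Complex.add_re, hcomm]
    congr 1
    generalize α ^ 2 / (ρ : ℂ) = r at hsub ⊢
    field_simp
    ring
  have hsq : ‖u‖ ^ 2 + (u ^ 2).re = 2 * u.re ^ 2 := by
    rw [Complex.sq_norm, Complex.normSq_apply, sq u, Complex.mul_re]
    ring
  rw [realPartForm, realPartForm, hnorm, hre]
  linear_combination hsq / 2

theorem abs_re_sq_div_le (ρ : ℝ) (α u : ℂ) :
    |(u ^ 2 / (1 - α ^ 2 / ρ)).re| ≤ ‖u‖ ^ 2 / ‖1 - α ^ 2 / (ρ : ℂ)‖ := by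
  rw [← norm_pow, ← norm_div]
  exact Complex.abs_re_le_norm _

theorem realPartForm_nonneg (hα : ‖α‖ ^ 2 < ρ) (u : ℂ) : 0 ≤ realPartForm ρ α u := by
  have hρ : 0 < ρ := (sq_nonneg _).trans_lt hα
  have hnorm : ‖α ^ 2 / (ρ : ℂ)‖ = ‖α‖ ^ 2 / ρ := by
    rw [norm_div, norm_pow, Complex.norm_real, Real.norm_of_nonneg hρ.le]
  have hle : 1 - ‖α‖ ^ 2 / ρ ≤ ‖1 - α ^ 2 / (ρ : ℂ)‖ := by
    rw [← hnorm, ← norm_one (α := ℂ)]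
    exact norm_sub_norm_le _ _
  have hpos : 0 < 1 - ‖α‖ ^ 2 / ρ := by rw [sub_pos, div_lt_one hρ]; exact hα
  have habs := (abs_le.mp ((abs_re_sq_div_le ρ α u).trans
    (div_le_div_of_nonneg_left (sq_nonneg ‖u‖) hpos hle))).1
  rw [realPartForm]
  linarith

theorem realPartForm_le (ρ : ℝ) (α u : ℂ) : realPartForm ρ α u ≤
    ‖u‖ ^ 2 * ((1 / (1 - ‖α‖ ^ 2 / ρ) + 1 / ‖1 - α ^ 2 / (ρ : ℂ)‖) / 2) := by
  have hre := (le_abs_self _).trans (abs_re_sq_div_le ρ α u)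
  calc realPartForm ρ α u
      ≤ (‖u‖ ^ 2 / (1 - ‖α‖ ^ 2 / ρ) + ‖u‖ ^ 2 / ‖1 - α ^ 2 / (ρ : ℂ)‖) / 2 := by
        rw [realPartForm]; gcongr
    _ = _ := by ring

theorem two_mul_mul_le_add_sq_div {c : ℝ} (hc : |c| ≤ 1) (x : ℝ) {t : ℝ} (ht : 0 < t) :
    2 * (c * x) ≤ t + x ^ 2 / t := by
  have hcx : c * x ≤ |x| := by
    calc c * x ≤ |c * x| := le_abs_self _
      _ ≤ |x| := by rw [abs_mul]; exact mul_le_of_le_one_left (abs_nonneg _) hc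
  have hamgm : |x| * 2 ≤ t + x ^ 2 / t := by
    rw [← sub_nonneg, show t + x ^ 2 / t - |x| * 2 = (t - |x|) ^ 2 / t by
      rw [sub_sq, sq_abs]; field_simp; ring]
    positivity
  linarith

-- A weighted form of the Cauchy–Schwarz inequality for `∑ k, c k * (u * α ^ k).re`, with the two
-- factors separated by the arithmetic-geometric mean inequality so that it can be proved by
-- induction.
theorem two_mul_re_mul_aeval_le (hα : ‖α‖ ^ 2 < ρ) (hρ : ρ < 1) {s : List ℤ}
    (hs : ∀ c ∈ s, |c| ≤ 1) (u : ℂ) {t : ℝ} (ht : 0 < t) :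
    2 * (u * aeval α (ofList s)).re ≤ t / (1 - ρ) + realPartForm ρ α u / t := by
  have hρ0 : 0 < ρ := (sq_nonneg _).trans_lt hα
  have hρ1 : 0 < 1 - ρ := sub_pos.mpr hρ
  induction s generalizing u t with
  | nil =>
    have := realPartForm_nonneg hα u
    simp only [ofList, map_zero, mul_zero, Complex.zero_re]
    positivity
  | cons c s ih =>
    simp only [List.mem_cons, forall_eq_or_imp] at hs
    have htail := ih hs.2 (u * α) (mul_pos hρ0 ht)
    have hsplit : (u * aeval α (ofList (c :: s))).re =
        c * u.re + (u * α * aeval α (ofList s)).re := by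
      simp only [ofList, map_add, map_mul, aeval_X, eq_intCast, map_intCast, mul_add, mul_assoc,
        Complex.add_re, mul_comm u (c : ℂ)]
      rw [← Complex.ofReal_intCast, Complex.re_ofReal_mul]
    have hhead := two_mul_mul_le_add_sq_div (by exact_mod_cast hs.1 : |(c : ℝ)| ≤ 1) u.re ht
    calc 2 * (u * aeval α (ofList (c :: s))).re
        ≤ (t + u.re ^ 2 / t) + (ρ * t / (1 - ρ) + realPartForm ρ α (u * α) / (ρ * t)) := by
          rw [hsplit]; linarith
      _ = t / (1 - ρ) + (u.re ^ 2 + realPartForm ρ α (u * α) / ρ) / t := by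
          field_simp
          ring
      _ = _ := by rw [← realPartForm_eq hα]

theorem norm_aeval_sq_le_div_one_sub (hα : ‖α‖ ^ 2 < ρ) (hρ : ρ < 1) {s : List ℤ}
    (hs : ∀ c ∈ s, |c| ≤ 1) : ‖aeval α (ofList s)‖ ^ 2 ≤
      (1 / (1 - ‖α‖ ^ 2 / ρ) + 1 / ‖1 - α ^ 2 / (ρ : ℂ)‖) / 2 / (1 - ρ) := by
  have hρ1 : 0 < 1 - ρ := sub_pos.mpr hρ
  have hm0 := (realPartForm_nonneg hα 1).trans (realPartForm_le ρ α 1)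
  have hform := realPartForm_le ρ α (conj (aeval α (ofList s)))
  rw [norm_one, one_pow, one_mul] at hm0
  set W := aeval α (ofList s)
  set m := (1 / (1 - ‖α‖ ^ 2 / ρ) + 1 / ‖1 - α ^ 2 / (ρ : ℂ)‖) / 2
  rw [Complex.norm_conj] at hform
  rcases (norm_nonneg W).eq_or_lt with h0 | hpos
  · rw [← h0, zero_pow two_ne_zero]
    positivity
  have hre : (conj W * W).re = ‖W‖ ^ 2 := by
    rw [mul_comm, Complex.mul_conj, Complex.ofReal_re, Complex.normSq_eq_norm_sq]
  have key := two_mul_re_mul_aeval_le hα hρ hs (conj W) (mul_pos (pow_pos hpos 2) hρ1)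
  rw [hre] at key
  have : 2 * ‖W‖ ^ 2 ≤ ‖W‖ ^ 2 + m / (1 - ρ) := by
    calc 2 * ‖W‖ ^ 2 ≤ ‖W‖ ^ 2 * (1 - ρ) / (1 - ρ) +
          realPartForm ρ α (conj W) / (‖W‖ ^ 2 * (1 - ρ)) :=
          key
      _ ≤ ‖W‖ ^ 2 * (1 - ρ) / (1 - ρ) + ‖W‖ ^ 2 * m / (‖W‖ ^ 2 * (1 - ρ)) := by gcongr
      _ = _ := by field_simp
  linarith

theorem norm_aeval_sq_le_of_abs_le_one (hα : ‖α‖ ^ 2 < ρ) (hρ : ρ < 1) {s : List ℤ}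
    (hs : ∀ c ∈ s, |c| ≤ 1) : ‖aeval α (ofList s)‖ ^ 2 ≤
      ρ / (2 * (1 - ρ)) * (1 / (ρ - ‖α‖ ^ 2) + 1 / ‖ρ - α ^ 2‖) := by
  have hρ0 : 0 < ρ := (sq_nonneg _).trans_lt hα
  have hnorm : ‖1 - α ^ 2 / (ρ : ℂ)‖ = ‖ρ - α ^ 2‖ / ρ := by
    rw [one_sub_div (by exact_mod_cast hρ0.ne'), norm_div, Complex.norm_real,
      Real.norm_of_nonneg hρ0.le]
  convert norm_aeval_sq_le_div_one_sub hα hρ hs using 1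
  rw [hnorm, one_sub_div hρ0.ne', one_div_div, one_div_div, ← div_div]
  ring

theorem aeval_map_one_sub_two_mul (α : ℂ) (hα : α ≠ 1) (l : List ℤ) :
    aeval α (ofList (l.map (1 - 2 * ·))) =
      (1 - α ^ l.length) / (1 - α) - 2 * aeval α (ofList l) := by
  have hα' : 1 - α ≠ 0 := sub_ne_zero.mpr hα.symm
  induction l with
  | nil => simp [ofList]
  | cons c l ih =>
    simp only [List.map_cons, ofList, map_add, map_mul, aeval_X, eq_intCast, map_intCast, ih,
      List.length_cons]
    push_cast
    field_simp
    ring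

theorem norm_one_div_sub_two_mul_aeval_sq_le (hα : ‖α‖ ^ 2 < ρ) (hρ : ρ < 1) {l : List ℤ}
    (hl : ∀ c ∈ l, c = 0 ∨ c = 1) : ‖1 / (1 - α) - 2 * aeval α (ofList l)‖ ^ 2 ≤
      ρ / (2 * (1 - ρ)) * (1 / (ρ - ‖α‖ ^ 2) + 1 / ‖ρ - α ^ 2‖) := by
  have hα1 : ‖α‖ < 1 := by nlinarith [norm_nonneg α]
  have hne : α ≠ 1 := by rintro rfl; simp at hα1
  have hlim : Filter.Tendsto (fun N : ℕ =>
      ‖(1 - α ^ (l.length + N)) / (1 - α) - 2 * aeval α (ofList l)‖ ^ 2) Filter.atTop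
      (nhds (‖(1 - 0) / (1 - α) - 2 * aeval α (ofList l)‖ ^ 2)) := by
    have hpow := (Filter.tendsto_add_atTop_iff_nat l.length).mpr
      (tendsto_pow_atTop_nhds_zero_of_norm_lt_one hα1)
    simp only [add_comm l.length]
    exact ((((hpow.const_sub 1).div_const _).sub_const _).norm).pow 2
  rw [sub_zero] at hlim
  refine le_of_tendsto' hlim fun N => ?_
  have hpad : ofList (l ++ List.replicate N 0) = ofList l := by
    rw [ofList_append, ofList_replicate_zero, mul_zero, add_zero]
  have hsum := aeval_map_one_sub_two_mul α hne (l ++ List.replicate N 0)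
  rw [hpad, List.length_append, List.length_replicate] at hsum
  rw [← hsum]
  refine norm_aeval_sq_le_of_abs_le_one hα hρ fun c hc => ?_
  obtain ⟨b, hb, rfl⟩ := List.mem_map.mp hc
  have hb : b = 0 ∨ b = 1 :=
    (List.mem_append.mp hb).elim (hl b) fun h => .inl (List.eq_of_mem_replicate h)
  rcases hb with rfl | rfl <;> norm_num

end CauchySchwarz

section ApproximateRoots

theorem exists_root_near {P : ℤ[X]} (hP : P.Monic) (hd : P.natDegree ≠ 0) {w : ℂ} {ε : ℝ}
    (hε : 0 < ε) (h : P.natDegree * ‖aeval w P‖ ≤ ε * ‖aeval w (derivative P)‖) :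
    ∃ α : ℂ, aeval α P = 0 ∧ ‖α - w‖ ≤ ε := by
  set p : ℂ[X] := P.map (Int.castRingHom ℂ) with hp
  have heval (Q : ℤ[X]) (x : ℂ) : (Q.map (Int.castRingHom ℂ)).eval x = aeval x Q := by
    simp [aeval_def, eval₂_eq_eval_map]
  by_cases hw : aeval w P = 0
  · exact ⟨w, hw, by simpa using hε.le⟩
  -- If all roots were far from `w`, then so small a value of `P w` would be incompatible with
  -- `P' w / P w = ∑ 1 / (w - α)`.
  by_contra! hfar
  have hcard : p.roots.card = P.natDegree := by
    rw [← hP.natDegree_map (Int.castRingHom ℂ)]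
    exact splits_iff_card_roots.mp (IsAlgClosed.splits p)
  have hsum := (IsAlgClosed.splits p).eval_derivative_div_eval_of_ne_zero (x := w)
    (by rwa [heval])
  rw [hp, derivative_map, heval, heval, ← hp] at hsum
  have hterm : ∀ α ∈ p.roots, ‖1 / (w - α)‖ < ε⁻¹ := by
    intro α hα
    have hroot : aeval α P = 0 := by rw [← heval]; exact (mem_roots (hP.map _).ne_zero).mp hα
    rw [norm_div, norm_one, one_div, norm_sub_rev]
    exact inv_strictAnti₀ hε (hfar α hroot)
  have hlt : ‖(p.roots.map fun z => 1 / (w - z)).sum‖ < P.natDegree * ε⁻¹ := by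
    refine (norm_multiset_sum_le _).trans_lt ?_
    rw [Multiset.map_map]
    have hne : p.roots ≠ 0 := Multiset.card_pos.mp (hcard ▸ Nat.pos_of_ne_zero hd)
    simpa [hcard] using Multiset.sum_lt_sum_of_nonempty hne hterm
  rw [← hsum, norm_div, div_lt_iff₀ (norm_pos_iff.mpr hw)] at hlt
  have : ε * ‖aeval w (derivative P)‖ < P.natDegree * ‖aeval w P‖ := by
    calc _ < ε * (P.natDegree * ε⁻¹ * ‖aeval w P‖) := by gcongr
      _ = _ := by field_simp
  exact this.not_ge h

variable {B : ℝ} {s : List ℤ} {α w : ℂ}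

theorem norm_aeval_ofList_le (hs : ∀ c ∈ s, |(c : ℝ)| ≤ B) (hw : ‖w‖ ≤ 1) :
    ‖aeval w (ofList s)‖ ≤ B * s.length := by
  induction s with
  | nil => simp [ofList]
  | cons a l ih =>
    simp only [List.mem_cons, forall_eq_or_imp] at hs
    simp only [ofList, map_add, map_mul, aeval_X, eq_intCast, map_intCast, List.length_cons]
    calc ‖(a : ℂ) + w * aeval w (ofList l)‖ ≤ ‖(a : ℂ)‖ + ‖w‖ * ‖aeval w (ofList l)‖ :=
          (norm_add_le _ _).trans_eq (by rw [norm_mul])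
      _ ≤ B + 1 * (B * l.length) := by
          gcongr
          · rw [Complex.norm_intCast]; exact hs.1
          · exact ih hs.2
      _ = B * (l.length + 1 : ℕ) := by push_cast; ring

theorem norm_aeval_ofList_sub_le (hs : ∀ c ∈ s, |(c : ℝ)| ≤ B) (hα : ‖α‖ ≤ 1) (hw : ‖w‖ ≤ 1) :
    ‖aeval α (ofList s) - aeval w (ofList s)‖ ≤ B * s.length ^ 2 * ‖α - w‖ := by
  induction s with
  | nil => simp [ofList]
  | cons a l ih =>
    simp only [List.mem_cons, forall_eq_or_imp] at hs
    have hB : 0 ≤ B := (abs_nonneg _).trans hs.1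
    simp only [ofList, map_add, map_mul, aeval_X, eq_intCast, map_intCast, List.length_cons]
    set U := aeval α (ofList l)
    set V := aeval w (ofList l)
    calc ‖(a : ℂ) + α * U - (a + w * V)‖ = ‖α * (U - V) + (α - w) * V‖ := by ring_nf
      _ ≤ ‖α‖ * ‖U - V‖ + ‖α - w‖ * ‖V‖ :=
          (norm_add_le _ _).trans_eq (by rw [norm_mul, norm_mul])
      _ ≤ 1 * (B * l.length ^ 2 * ‖α - w‖) + ‖α - w‖ * (B * l.length) := by
          gcongr
          exacts [ih hs.2, norm_aeval_ofList_le hs.2 hw]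
      _ ≤ B * (l.length + 1 : ℕ) ^ 2 * ‖α - w‖ := by
          have : 0 ≤ B * (l.length + 1) * ‖α - w‖ := by positivity
          push_cast
          linarith

variable {ε a b : ℝ}

theorem norm_lt_one_of_near (hαw : ‖α - w‖ ≤ ε) (ha : 0 < a) (haw : a + 6 * ε ≤ 1 - ‖w‖ ^ 2) :
    ‖α‖ < 1 := by
  have hε : 0 ≤ ε := (norm_nonneg _).trans hαw
  nlinarith [norm_sub_norm_le α w, norm_nonneg α, norm_nonneg w]

theorem norm_one_sub_sq_le_of_near (hαw : ‖α - w‖ ≤ ε) (hw : ‖w‖ ≤ 1) (hε : ε ≤ 2) :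
    ‖1 - α‖ ^ 2 ≤ ‖1 - w‖ ^ 2 + 6 * ε := by
  have h1 : ‖1 - α‖ ≤ ‖1 - w‖ + ε := by
    calc ‖1 - α‖ = ‖(1 - w) - (α - w)‖ := by ring_nf
      _ ≤ _ := (norm_sub_le _ _).trans (by gcongr)
  have h2 : ‖1 - w‖ ≤ 2 := by linarith [norm_sub_le 1 w, norm_one (α := ℂ)]
  nlinarith [norm_nonneg (1 - α), norm_nonneg (α - w)]

theorem norm_one_div_sub_sq_le_of_near (hαw : ‖α - w‖ ≤ ε) (ha : 0 < a)
    (haw : a + 6 * ε ≤ 1 - ‖w‖ ^ 2) (hb : 0 < b) (hbw : b + 6 * ε ≤ ‖1 + ‖w‖ ^ 2 - 2 * w ^ 2‖)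
    {l : List ℤ} (hl : ∀ c ∈ l, c = 0 ∨ c = 1) :
    ‖1 / (1 - α) - 2 * aeval α (ofList l)‖ ^ 2 ≤
      (1 + ‖w‖ ^ 2) / (1 - ‖w‖ ^ 2) * (1 / a + 1 / b) := by
  have hε : 0 ≤ ε := (norm_nonneg _).trans hαw
  have hw : ‖w‖ ≤ 1 := by nlinarith [norm_nonneg w]
  have : 0 < 1 - ‖w‖ ^ 2 := by linarith
  have hε1 : ε ≤ 1 := by nlinarith [norm_nonneg w]
  have hsum : ‖α + w‖ ≤ 3 := by
    calc ‖α + w‖ = ‖(α - w) + (w + w)‖ := by ring_nf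
      _ ≤ ‖α - w‖ + (‖w‖ + ‖w‖) := (norm_add_le _ _).trans (by gcongr; exact norm_add_le _ _)
      _ ≤ 3 := by linarith
  have hsq : ‖α ^ 2 - w ^ 2‖ ≤ 3 * ε := by
    rw [sq_sub_sq, norm_mul]
    exact mul_le_mul hsum hαw (norm_nonneg _) (by norm_num)
  set ρ : ℝ := (1 + ‖w‖ ^ 2) / 2 with hρ
  have hreal : a / 2 ≤ ρ - ‖α‖ ^ 2 := by
    have : ‖α‖ ^ 2 ≤ ‖w‖ ^ 2 + 3 * ε := by
      rw [← norm_pow, ← norm_pow]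
      linarith [norm_sub_norm_le (α ^ 2) (w ^ 2)]
    rw [hρ]
    linarith
  have hangular : b / 2 ≤ ‖ρ - α ^ 2‖ := by
    have heq : (1 + ‖w‖ ^ 2 - 2 * w ^ 2 : ℂ) = 2 * (ρ - α ^ 2) + 2 * (α ^ 2 - w ^ 2) := by
      rw [hρ]
      push_cast
      ring
    have := norm_add_le (2 * (ρ - α ^ 2)) (2 * (α ^ 2 - w ^ 2))
    rw [← heq, norm_mul, norm_mul, Complex.norm_ofNat] at this
    linarith
  calc _ ≤ ρ / (2 * (1 - ρ)) * (1 / (ρ - ‖α‖ ^ 2) + 1 / ‖ρ - α ^ 2‖) :=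
        norm_one_div_sub_two_mul_aeval_sq_le (by linarith) (by linarith) hl
    _ ≤ ρ / (2 * (1 - ρ)) * (1 / (a / 2) + 1 / (b / 2)) := by
        have : 0 ≤ ρ / (2 * (1 - ρ)) := div_nonneg (by positivity) (by linarith)
        gcongr
    _ = _ := by
        have : 2 * (1 - ρ) = 1 - ‖w‖ ^ 2 := by rw [hρ]; ring
        rw [this, hρ]
        ring

theorem norm_one_add_sub_le_of_near {n : ℕ} (hs : ∀ c ∈ s, |(c : ℝ)| ≤ B) (hB : 0 ≤ B)
    (hn : s.length ≤ n) (hα : ‖α‖ ≤ 1) (hw : ‖w‖ ≤ 1) :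
    ‖(1 + 2 * (1 - w) * aeval w (ofList s)) - (1 + 2 * (1 - α) * aeval α (ofList s))‖ ≤
      6 * B * n ^ 2 * ‖α - w‖ := by
  set U := aeval α (ofList s)
  set V := aeval w (ofList s)
  have hU : ‖U‖ ≤ B * n ^ 2 := by
    calc ‖U‖ ≤ B * s.length := norm_aeval_ofList_le hs hα
      _ ≤ B * n ^ 2 := by
          gcongr
          exact_mod_cast hn.trans (Nat.le_self_pow two_ne_zero n)
  have hUV : ‖U - V‖ ≤ B * n ^ 2 * ‖α - w‖ :=
    (norm_aeval_ofList_sub_le hs hα hw).trans (by gcongr)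
  have hw2 : ‖1 - w‖ ≤ 2 := by
    linarith [norm_sub_le 1 w, norm_one (α := ℂ)]
  calc ‖(1 + 2 * (1 - w) * V) - (1 + 2 * (1 - α) * U)‖
      = ‖2 * ((α - w) * U - (1 - w) * (U - V))‖ := by ring_nf
    _ ≤ 2 * (‖α - w‖ * ‖U‖ + ‖1 - w‖ * ‖U - V‖) := by
        rw [norm_mul, Complex.norm_ofNat, ← norm_mul, ← norm_mul]
        gcongr
        exact norm_sub_le _ _
    _ ≤ 2 * (‖α - w‖ * (B * n ^ 2) + 2 * (B * n ^ 2 * ‖α - w‖)) := by gcongr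
    _ = _ := by ring

theorem norm_one_add_sq_le_of_dvd {P : ℤ[X]} (hroot : aeval α P = 0) {n : ℕ}
    (hαw : ‖α - w‖ ≤ ε) (ha : 0 < a) (haw : a + 6 * ε ≤ 1 - ‖w‖ ^ 2) (hb : 0 < b)
    (hbw : b + 6 * ε ≤ ‖1 + ‖w‖ ^ 2 - 2 * w ^ 2‖) (hs : ∀ c ∈ s, |(c : ℝ)| ≤ B) (hB : 0 ≤ B)
    (hn : s.length ≤ n) {l : List ℤ} (hl : ∀ c ∈ l, c = 0 ∨ c = 1)
    (hdvd : P ∣ ofList s + ofList l) :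
    ‖1 + 2 * (1 - w) * aeval w (ofList s)‖ ^ 2 ≤ (1 + 6 * B * n ^ 2 * ε) *
      ((‖1 - w‖ ^ 2 + 6 * ε) * ((1 + ‖w‖ ^ 2) / (1 - ‖w‖ ^ 2) * (1 / a + 1 / b)) +
        6 * B * n ^ 2 * ε) := by
  have hε : 0 ≤ ε := (norm_nonneg _).trans hαw
  have hw : ‖w‖ ≤ 1 := by nlinarith [norm_nonneg w]
  have hα : ‖α‖ < 1 := norm_lt_one_of_near hαw ha haw
  have hne : 1 - α ≠ 0 := sub_ne_zero.mpr (by rintro rfl; simp at hα)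
  set E := 6 * B * n ^ 2 * ε
  set M := (1 + ‖w‖ ^ 2) / (1 - ‖w‖ ^ 2) * (1 / a + 1 / b)
  set sw := 1 + 2 * (1 - w) * aeval w (ofList s)
  set sα := 1 + 2 * (1 - α) * aeval α (ofList s) with hsα
  have hE0 : 0 ≤ E := by positivity
  have htail : sα = (1 - α) * (1 / (1 - α) - 2 * aeval α (ofList l)) := by
    have hzero := aeval_eq_zero_of_dvd_aeval_eq_zero hdvd hroot
    rw [map_add] at hzero
    rw [mul_sub, mul_one_div_cancel hne, hsα, eq_neg_of_add_eq_zero_left hzero]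
    ring
  have hsα_le : ‖sα‖ ^ 2 ≤ (‖1 - w‖ ^ 2 + 6 * ε) * M := by
    rw [htail, norm_mul, mul_pow]
    gcongr
    · exact norm_one_sub_sq_le_of_near hαw hw (by nlinarith [norm_nonneg w])
    · exact norm_one_div_sub_sq_le_of_near hαw ha haw hb hbw hl
  have hsw : ‖sw‖ ≤ ‖sα‖ + E := by
    have := (norm_one_add_sub_le_of_near hs hB hn hα.le hw).trans
      (mul_le_mul_of_nonneg_left hαw (by positivity))
    linarith [norm_sub_norm_le sw sα]
  calc ‖sw‖ ^ 2 ≤ (‖sα‖ + E) ^ 2 := by gcongr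
    _ ≤ (1 + E) * (‖sα‖ ^ 2 + E) := by nlinarith [mul_nonneg hE0 (sq_nonneg (‖sα‖ - 1))]
    _ ≤ _ := by gcongr

end ApproximateRoots

section GaussianIntegers

/-- The common denominator of the approximate roots. -/
def scale : ℤ := 10 ^ 8

/-- An approximate root `z / scale` lies within `radius / scale` of a root. -/
def radius : ℤ := 16

/-- A bound for the coefficients of the lists to which the rejection test applies. -/
def height : ℕ := 24

/-- The complex number represented by the Gaussian integer `z`. -/
noncomputable def point (z : ℤ[i]) : ℂ := (z : ℂ) / scale

/-- The product of an integer and a Gaussian integer. -/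
def intMul (a : ℤ) (z : ℤ[i]) : ℤ[i] := ⟨a * z.re, a * z.im⟩

/-- The list of the `x * z ^ k * scale ^ (n - k)` for `k ≤ n`. -/
def weights (z x : ℤ[i]) : ℕ → List ℤ[i]
  | 0 => [x]
  | n + 1 => intMul (scale ^ (n + 1)) x :: weights z (z * x) n

/-- The linear combination of Gaussian integers with the given coefficients. -/
def dot : List ℤ → List ℤ[i] → ℤ[i]
  | t :: T, w :: W => intMul t w + dot T W
  | _, _ => 0

/-- The value at `(z, scale)` of the form of degree `n` with the given coefficients. -/
def homEval (n : ℕ) (z : ℤ[i]) (T : List ℤ) : ℤ[i] := dot T (weights z 1 n)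

/-- The product of each coefficient by its index, counted from `k`. -/
def mulIndex : (k : ℤ) → List ℤ → List ℤ
  | _, [] => []
  | k, c :: l => k * c :: mulIndex (k + 1) l

theorem scale_pos : 0 < scale := by norm_num [scale]

theorem scale_ne_zero : (scale : ℂ) ≠ 0 := by exact_mod_cast scale_pos.ne'

theorem toComplex_intMul (a : ℤ) (z : ℤ[i]) : (intMul a z : ℂ) = a * (z : ℂ) := by
  rw [intMul, GaussianInt.toComplex_def', GaussianInt.toComplex_def]
  push_cast
  ring

theorem toComplex_dot_weights (z x : ℤ[i]) {n : ℕ} {T : List ℤ} (hT : T.length ≤ n + 1) :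
    (dot T (weights z x n) : ℂ) = x * scale ^ n * aeval (point z) (ofList T) := by
  induction T generalizing x n with
  | nil => simp [dot, ofList]
  | cons t T ih =>
    cases n with
    | zero =>
      obtain rfl : T = [] := List.length_eq_zero_iff.mp (by simpa using hT)
      simp [weights, dot, ofList, toComplex_intMul, mul_comm]
    | succ n =>
      have hz : (z : ℂ) = point z * scale := (div_mul_cancel₀ _ scale_ne_zero).symm
      have htail := ih (z * x) (n := n) (by simpa using hT)
      simp only [weights, dot, map_add, toComplex_intMul, htail, ofList,
        map_mul, aeval_X, eq_intCast, map_intCast]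
      rw [hz]
      push_cast
      ring

theorem toComplex_homEval (z : ℤ[i]) {n : ℕ} {T : List ℤ} (hT : T.length ≤ n + 1) :
    (homEval n z T : ℂ) = scale ^ n * aeval (point z) (ofList T) := by
  rw [homEval, toComplex_dot_weights z 1 hT, GaussianInt.toComplex_one, one_mul]

theorem ofList_mulIndex (k : ℤ) (l : List ℤ) :
    ofList (mulIndex k l) = C k * ofList l + X * derivative (ofList l) := by
  induction l generalizing k with
  | nil => simp [mulIndex, ofList]
  | cons c l ih =>
    simp only [mulIndex, ofList, ih, map_add, map_mul, derivative_mul,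
      derivative_C, derivative_X, map_one]
    ring

theorem derivative_ofList_cons (c : ℤ) (l : List ℤ) :
    derivative (ofList (c :: l)) = ofList (mulIndex 1 l) := by
  simp [ofList, ofList_mulIndex]

theorem length_mulIndex (k : ℤ) (l : List ℤ) : (mulIndex k l).length = l.length := by
  induction l generalizing k with
  | nil => rfl
  | cons c l ih => simp [mulIndex, ih]

/-- The allowance for the distance between an approximate root and a root, on the scale of the
squares of absolute values. -/
def slack : ℤ := 6 * radius * scale

/-- A lower bound for `scale ^ 2 * (1 + ‖w‖ ^ 2 - 2 * ‖α‖ ^ 2)`, where `w = z / scale` and `α` is a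
root near `w`. -/
def realGap (z : ℤ[i]) : ℤ := scale ^ 2 - z.norm - slack

/-- A lower bound for `scale ^ 2 * ‖1 + ‖w‖ ^ 2 - 2 * α ^ 2‖`, where `w = z / scale` and `α` is a
root near `w`. -/
def angularGap (z : ℤ[i]) : ℤ :=
  let v : ℤ[i] := ⟨scale ^ 2 + z.norm, 0⟩ - 2 * (z * z)
  max |v.re| |v.im| - slack

/-- Whether `ofList (1 :: q)` has a root close to `z / scale` by the inequality
`n * ‖P w‖ ≤ ε * ‖P' w‖`, and this root is well inside the unit disc. -/
def isApproxRoot (q : List ℤ) (z : ℤ[i]) : Bool :=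
  decide (0 < realGap z ∧ 0 < angularGap z) &&
  decide ((q.length * scale) ^ 2 * (homEval q.length z (1 :: q)).norm ≤
    radius ^ 2 * (homEval q.length z (mulIndex 1 q)).norm)

/-- Whether `ofList T` is too large at `z / scale` to cancel a polynomial with coefficients `0` and
`1` at a root near `z / scale`: the inequality contradicts `norm_one_add_sq_le_of_dvd`, after
clearing denominators. -/
def refutes (n : ℕ) (z : ℤ[i]) (T : List ℤ) : Bool :=
  let a := realGap z
  let b := angularGap z
  let e := 6 * height * radius * n ^ 2
  decide (scale ^ (2 * n + 2) * (scale + e) *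
      (scale * ((scale - z).norm + slack) * (scale ^ 2 + z.norm) * (a + b) +
        e * (scale ^ 2 - z.norm) * (a * b)) <
    scale ^ 2 * (scale ^ 2 - z.norm) * a * b *
      (scale ^ (n + 1) + 2 * (scale - z) * homEval n z T).norm) &&
  T.all fun t => t.natAbs ≤ height

theorem cast_norm_eq (z : ℤ[i]) : (z.norm : ℝ) = ‖(z : ℂ)‖ ^ 2 := by
  rw [GaussianInt.intCast_real_norm, Complex.normSq_eq_norm_sq]

theorem cast_norm_eq_scale_sq_mul (z : ℤ[i]) : (z.norm : ℝ) = scale ^ 2 * ‖point z‖ ^ 2 := by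
  rw [cast_norm_eq, point, norm_div, Complex.norm_intCast, div_pow, sq_abs,
    mul_div_cancel₀ _ (pow_ne_zero 2 (by exact_mod_cast scale_pos.ne'))]

theorem realGap_div_add (z : ℤ[i]) :
    (realGap z / scale ^ 2 + 6 * (radius / scale) : ℝ) = 1 - ‖point z‖ ^ 2 := by
  have hS : (scale : ℝ) ≠ 0 := by exact_mod_cast scale_pos.ne'
  rw [realGap, slack]
  push_cast
  rw [cast_norm_eq_scale_sq_mul]
  field_simp
  ring

theorem norm_lt_one_of_near_point {z : ℤ[i]} (hz : 0 < realGap z) {α : ℂ}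
    (hα : ‖α - point z‖ ≤ radius / scale) : ‖α‖ < 1 :=
  norm_lt_one_of_near hα (div_pos (Int.cast_pos.mpr hz) (pow_pos (Int.cast_pos.mpr scale_pos) 2))
    (realGap_div_add z).le

theorem angularGap_le (z : ℤ[i]) : (angularGap z : ℝ) ≤
    scale ^ 2 * (‖1 + ‖point z‖ ^ 2 - 2 * point z ^ 2‖ - 6 * (radius / scale)) := by
  have hS : (scale : ℝ) ≠ 0 := by exact_mod_cast scale_pos.ne'
  set v : ℤ[i] := ⟨scale ^ 2 + z.norm, 0⟩ - 2 * (z * z) with hv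
  have hnorm : ‖(v : ℂ)‖ = scale ^ 2 * ‖1 + ‖point z‖ ^ 2 - 2 * point z ^ 2‖ := by
    have hz : (z : ℂ) = point z * scale := (div_mul_cancel₀ _ scale_ne_zero).symm
    have hN : (z.norm : ℂ) = scale ^ 2 * ‖point z‖ ^ 2 := by
      exact_mod_cast cast_norm_eq_scale_sq_mul z
    have : (v : ℂ) = scale ^ 2 * (1 + ‖point z‖ ^ 2 - 2 * point z ^ 2) := by
      rw [hv, GaussianInt.toComplex_sub, GaussianInt.toComplex_def', GaussianInt.toComplex_mul,
        GaussianInt.toComplex_mul, hz]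
      push_cast
      rw [hN, map_ofNat]
      ring
    rw [this, norm_mul, norm_pow, Complex.norm_intCast, sq_abs]
  have hmax : ((max |v.re| |v.im| : ℤ) : ℝ) ≤ ‖(v : ℂ)‖ := by
    push_cast
    rw [GaussianInt.intCast_re, GaussianInt.intCast_im]
    exact max_le (Complex.abs_re_le_norm _) (Complex.abs_im_le_norm _)
  calc (angularGap z : ℝ) = (max |v.re| |v.im| : ℤ) - (slack : ℤ) := by
        rw [angularGap]; push_cast; rfl
    _ ≤ ‖(v : ℂ)‖ - (slack : ℤ) := by gcongr
    _ = _ := by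
        rw [hnorm, slack]
        push_cast
        field_simp

variable {q : List ℤ} {z : ℤ[i]}

theorem exists_root_of_isApproxRoot (hP : (ofList (1 :: q)).Monic)
    (hd : (ofList (1 :: q)).natDegree = q.length) (hq : q ≠ []) (h : isApproxRoot q z) :
    ∃ α : ℂ, aeval α (ofList (1 :: q)) = 0 ∧ ‖α - point z‖ ≤ radius / scale := by
  have hS : (0 : ℝ) < scale := by exact_mod_cast scale_pos
  have hr : (0 : ℝ) < radius := by norm_num [radius]
  simp only [isApproxRoot, Bool.and_eq_true, decide_eq_true_eq] at h
  refine exists_root_near hP (by simpa [hd] using hq) (div_pos hr hS) ?_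
  have hle : ((q.length : ℝ) * scale * ‖(homEval q.length z (1 :: q) : ℂ)‖) ^ 2 ≤
      (radius * ‖(homEval q.length z (mulIndex 1 q) : ℂ)‖) ^ 2 := by
    rw [mul_pow _ ‖_‖, mul_pow (radius : ℝ), ← cast_norm_eq, ← cast_norm_eq]
    exact_mod_cast h.2
  have hle := abs_le_of_sq_le_sq' hle (by positivity)
  rw [toComplex_homEval z List.length_cons.le,
    toComplex_homEval z ((length_mulIndex 1 q).le.trans q.length.le_succ), norm_mul, norm_mul,
    norm_pow, Complex.norm_intCast, abs_of_pos hS, ← derivative_ofList_cons 1] at hle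
  rw [hd, div_mul_eq_mul_div, le_div_iff₀ hS]
  have hpos : (0 : ℝ) < scale ^ q.length := by positivity
  refine le_of_mul_le_mul_left ?_ hpos
  linarith [hle.2]

theorem lt_of_refutes {n : ℕ} {T : List ℤ} (hT : T.length ≤ n) (h : refutes n z T) :
    (1 + 6 * height * n ^ 2 * (radius / scale)) *
      ((‖1 - point z‖ ^ 2 + 6 * (radius / scale)) * (1 + ‖point z‖ ^ 2) *
          (realGap z / scale ^ 2 + angularGap z / scale ^ 2) +
        6 * height * n ^ 2 * (radius / scale) * (1 - ‖point z‖ ^ 2) *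
          (realGap z / scale ^ 2 * (angularGap z / scale ^ 2))) <
      (1 - ‖point z‖ ^ 2) * (realGap z / scale ^ 2 * (angularGap z / scale ^ 2)) *
        ‖1 + 2 * (1 - point z) * aeval (point z) (ofList T)‖ ^ 2 := by
  have hS : (0 : ℝ) < scale := by exact_mod_cast scale_pos
  have hz : (z : ℂ) = point z * scale := (div_mul_cancel₀ _ scale_ne_zero).symm
  have hdist : ((scale - z : ℤ[i]).norm : ℝ) = scale ^ 2 * ‖1 - point z‖ ^ 2 := by
    have : (((scale : ℤ[i]) - z : ℤ[i]) : ℂ) = scale * (1 - point z) := by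
      rw [GaussianInt.toComplex_sub, map_intCast, hz]
      ring
    rw [cast_norm_eq, this, norm_mul, mul_pow, Complex.norm_intCast, sq_abs]
  have hvalue : ((scale ^ (n + 1) + 2 * (scale - z) * homEval n z T : ℤ[i]).norm : ℝ) =
      scale ^ (2 * n + 2) * ‖1 + 2 * (1 - point z) * aeval (point z) (ofList T)‖ ^ 2 := by
    have : ((scale ^ (n + 1) + 2 * (scale - z) * homEval n z T : ℤ[i]) : ℂ) =
        scale ^ (n + 1) * (1 + 2 * (1 - point z) * aeval (point z) (ofList T)) := by
      simp only [map_add, map_mul, map_sub, map_pow, map_intCast, map_ofNat,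
        toComplex_homEval z (hT.trans n.le_succ)]
      rw [hz]
      ring
    rw [cast_norm_eq, this, norm_mul, mul_pow, norm_pow, Complex.norm_intCast, abs_of_pos hS]
    ring
  simp only [refutes, slack, Bool.and_eq_true] at h
  have hlt := (Int.cast_lt (R := ℝ)).mpr (of_decide_eq_true h.1)
  push_cast at hlt
  rw [hvalue, hdist, cast_norm_eq_scale_sq_mul] at hlt
  refine lt_of_mul_lt_mul_left (a := (scale : ℝ) ^ (2 * n + 2) * scale ^ 8) ?_ (by positivity)
  convert hlt using 1 <;> field_simp

theorem not_dvd_of_refutes {P : ℤ[X]} {α : ℂ} (hroot : aeval α P = 0)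
    (hα : ‖α - point z‖ ≤ radius / scale) (ha : 0 < realGap z) (hb : 0 < angularGap z)
    {n : ℕ} {T l : List ℤ} (hT : T.length ≤ n) (h : refutes n z T)
    (hl : ∀ c ∈ l, c = 0 ∨ c = 1) : ¬ P ∣ ofList T + ofList l := by
  intro hdvd
  have hS : (0 : ℝ) < scale ^ 2 := by exact_mod_cast pow_pos scale_pos 2
  have ha' : (0 : ℝ) < realGap z / scale ^ 2 := div_pos (by exact_mod_cast ha) hS
  have hb' : (0 : ℝ) < angularGap z / scale ^ 2 := div_pos (by exact_mod_cast hb) hS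
  have hbw : angularGap z / (scale : ℝ) ^ 2 + 6 * (radius / scale) ≤
      ‖1 + ‖point z‖ ^ 2 - 2 * point z ^ 2‖ := by
    rw [← le_sub_iff_add_le, div_le_iff₀' hS]
    exact angularGap_le z
  have hcoeff : ∀ t ∈ T, |(t : ℝ)| ≤ height := by
    simp only [refutes, Bool.and_eq_true, List.all_eq_true, decide_eq_true_eq] at h
    intro t ht
    exact_mod_cast (Int.abs_eq_natAbs t).trans_le (Int.ofNat_le.mpr (h.2 t ht))
  have hω : 0 < 1 - ‖point z‖ ^ 2 := by
    have : (0 : ℝ) ≤ radius / scale := (norm_nonneg _).trans hα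
    linarith [realGap_div_add z]
  have hle := norm_one_add_sq_le_of_dvd hroot hα ha' (realGap_div_add z).le hb' hbw hcoeff
    (by norm_num [height]) hT hl hdvd
  refine (lt_of_refutes hT h).not_ge ?_
  have := mul_le_mul_of_nonneg_left hle (mul_nonneg hω.le (mul_nonneg ha'.le hb'.le))
  convert this using 1
  field_simp
  ring

end GaussianIntegers

section Candidates

/-- Whether the approximate roots `zs` of `ofList (1 :: q)` suffice to show that this polynomial has
no Newman multiple. The search limit is ample for every polynomial to which this is applied. -/
def excludes (zs : List ℤ[i]) (q : List ℤ) : Bool :=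
  let dead := fun T => zs.any fun z => refutes q.length z T
  let start := next q 1 []
  let V := explore q dead 400 [start] []
  zs.all (isApproxRoot q) && ((dead start || V.contains start) && isClosed q dead V)

theorem noNewmanMultiple_of_excludes {zs : List ℤ[i]} {q : List ℤ} (hP : (ofList (1 :: q)).Monic)
    (hd : (ofList (1 :: q)).natDegree = q.length) (hq : q ≠ []) (h : excludes zs q) :
    NoNewmanMultiple (ofList (1 :: q)) := by
  obtain ⟨hroots, hstart, hV⟩ := by
    simpa only [excludes, Bool.and_eq_true, List.all_eq_true] using h
  refine noNewmanMultiple_of_forall_not_dvd fun l hl => not_dvd_of_isClosed hP hd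
    (fun T hT hdead l hl => ?_) hV hl (length_next_le (T := []) 1 (Nat.zero_le _)) hstart
  obtain ⟨z, hz, hrefutes⟩ := List.any_eq_true.mp hdead
  obtain ⟨α, hroot, hα⟩ := exists_root_of_isApproxRoot hP hd hq (hroots z hz)
  have hgap := hroots z hz
  simp only [isApproxRoot, Bool.and_eq_true, decide_eq_true_eq] at hgap
  exact not_dvd_of_refutes hroot hα hgap.1.1 hgap.1.2 hT hrefutes hl

/-- The coefficient list of `(X ^ n - 1) ^ 2`. -/
def sqXPowSubOne (n : ℕ) : List ℤ :=
  1 :: (List.replicate (n - 1) 0 ++ -2 :: (List.replicate (n - 1) 0 ++ [1]))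

theorem ofList_sqXPowSubOne {n : ℕ} (hn : 0 < n) :
    ofList (sqXPowSubOne n) = (X ^ n - 1) * (X ^ n - 1) := by
  obtain ⟨m, rfl⟩ := Nat.exists_eq_add_one.mpr hn
  simp only [sqXPowSubOne, ofList, ofList_append, ofList_replicate_zero, List.length_replicate,
    Nat.add_sub_cancel, map_one, map_neg, map_ofNat]
  ring

/-- The lists of length `n` with entries `1` and `-1`. -/
def signLists : ℕ → List (List ℤ)
  | 0 => [[]]
  | n + 1 => (signLists n).map (-1 :: ·) ++ (signLists n).map (1 :: ·)

theorem mem_signLists {l : List ℤ} (hl : ∀ c ∈ l, c = 1 ∨ c = -1) : l ∈ signLists l.length := by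
  induction l with
  | nil => simp [signLists]
  | cons c l ih =>
    simp only [List.mem_cons, forall_eq_or_imp] at hl
    simpa [signLists, ih hl.2, eq_comm, or_comm] using hl.1

/-- The coefficient lists with constant and leading coefficient `1` and with signs `pre ++ l` in
between, where `l` has length `n`, that are not excluded by a nonpositive value at `1` and do not
come after their reversal. -/
def candidates (pre : List ℤ) (n : ℕ) : List (List ℤ) :=
  ((signLists n).map fun l => 1 :: (pre ++ l ++ [1])).filter fun p => 0 < p.sum ∧ p ≤ p.reverse

theorem mem_candidates_succ {pre p : List ℤ} {n : ℕ} :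
    p ∈ candidates pre (n + 1) ↔
      p ∈ candidates (pre ++ [-1]) n ∨ p ∈ candidates (pre ++ [1]) n := by
  simp only [candidates, ← List.mem_append, ← List.filter_append, signLists, List.map_append,
    List.map_map, Function.comp_def, List.append_assoc, List.singleton_append]

theorem mem_candidates_or_reverse_mem {l : List ℤ} (hl : ∀ c ∈ l, c = 1 ∨ c = -1)
    (hsum : 0 < (1 :: (l ++ [1])).sum) : 1 :: (l ++ [1]) ∈ candidates [] l.length ∨
      (1 :: (l ++ [1])).reverse ∈ candidates [] l.length := by
  rcases le_total (1 :: (l ++ [1])) (1 :: (l ++ [1])).reverse with h | h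
  · left
    simp only [candidates, List.mem_filter, List.mem_map, List.nil_append, decide_eq_true_eq]
    exact ⟨⟨l, mem_signLists hl, rfl⟩, hsum, h⟩
  · right
    simp only [candidates, List.mem_filter, List.mem_map, List.nil_append, decide_eq_true_eq,
      List.reverse_reverse, List.sum_reverse]
    refine ⟨⟨l.reverse, ?_, by simp⟩, hsum, h⟩
    simpa using mem_signLists (l := l.reverse) (by simpa using hl)

/-- Whether two lists have the same length and corresponding entries satisfy `f`. -/
def all₂ {α β : Type*} (f : α → β → Bool) : List α → List β → Bool
  | [], [] => true
  | a :: l, b :: m => f a b && all₂ f l m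
  | _, _ => false

theorem exists_of_all₂ {α β : Type*} {f : α → β → Bool} {l : List α} {m : List β}
    (h : all₂ f l m) {a : α} (ha : a ∈ l) : ∃ b, f a b := by
  fun_induction all₂ f l m with
  | case1 => simp at ha
  | case2 b l c m ih =>
    rw [Bool.and_eq_true] at h
    rcases List.mem_cons.mp ha with rfl | ha
    exacts [⟨c, h.1⟩, ih h.2 ha]
  | case3 => simp at h

end Candidates

section Exceptional

/-- The coefficient lists of the Littlewood polynomials in the classification. -/
def exceptional : List (List ℤ) := [
  [1, 1, -1, -1, -1, 1, 1],
  [1, 1, -1, 1, 1, -1, 1, 1],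
  [1, 1, -1, -1, 1, -1, -1, 1, 1],
  [1, 1, 1, -1, -1, -1, -1, 1, 1, 1],
  [1, -1, 1, 1, -1, 1, -1, 1, 1, -1, 1],
  [1, 1, 1, -1, -1, -1, -1, -1, 1, 1, 1],
  [1, 1, -1, -1, -1, 1, 1, 1, -1, -1, -1, 1, 1],
  [1, -1, 1, 1, -1, 1, 1, 1, -1, 1, 1, -1, 1],
  [1, 1, 1, -1, -1, -1, 1, -1, -1, -1, 1, 1, 1]]

/-- Newman multiples of the exceptional polynomials, and approximate roots inside the unit disc. -/
def exceptionalWitnesses : List (List ℤ × ℤ[i]) := [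
  ([1, 1, 0, 1, 0, 1, 0, 0, 0, 0, 1, 0, 1, 0, 1, 1], ⟨-64266105, 0⟩),
  ([1, 1, 0, 1, 0, 1, 0, 1, 1, 1, 1, 0, 1, 0, 1, 0, 1, 1], ⟨-63197256, 0⟩),
  ([1, 1, 0, 0, 1, 0, 1, 0, 0, 0, 0, 0, 0, 1, 0, 1, 0, 0, 1, 1], ⟨-67121185, 34921650⟩),
  ([1, 1, 1, 0, 1, 1, 0, 0, 1, 0, 1, 1, 0, 1, 0, 0, 1, 1, 0, 1, 1, 1], ⟨-41085718, 62917946⟩),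
  ([1, 0, 1, 1, 1, 0, 0, 0, 0, 1, 1, 0, 0, 0, 1, 1, 0, 0, 0, 0, 1, 1, 1, 0, 1],
    ⟨35049428, 67433456⟩),
  ([1, 1, 1, 0, 0, 1, 0, 0, 1, 0, 1, 1, 0, 1, 1, 0, 0, 0, 0, 0, 0, 1, 1, 0, 1, 1, 0, 1, 0, 0, 1,
    0, 0, 1, 1, 1], ⟨-35049428, 67433456⟩),
  ([1, 1, 0, 1, 0, 1, 0, 1, 0, 1, 0, 1, 0, 0, 0, 0, 1, 0, 1, 0, 1, 0, 1, 0, 1, 0, 1, 1],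
    ⟨-61911871, 0⟩),
  ([1, 0, 1, 1, 0, 1, 0, 1, 1, 0, 0, 0, 1, 0, 0, 1, 1, 1, 0, 1, 0, 0, 0, 0, 0, 1, 1, 0, 1, 1, 0,
    0, 0, 1, 1, 0, 1, 1, 0, 0, 0, 0, 0, 1, 0, 1, 1, 1, 0, 0, 1, 0, 0, 0, 1, 1, 0, 1, 0, 1, 1, 0,
    1], ⟨21128136, 78305503⟩),
  ([1, 1, 1, 0, 0, 0, 1, 0, 0, 1, 0, 0, 1, 1, 0, 1, 1, 0, 0, 0, 0, 0, 0, 0, 0, 1, 1, 0, 1, 1, 0,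
    0, 1, 0, 0, 1, 0, 0, 0, 1, 1, 1], ⟨-21128136, 78305503⟩)]

/-- Whether `e.1` is the coefficient list of a Newman multiple of `ofList p`, and `e.2` approximates
a root of `ofList p` in the unit disc. -/
def isExceptionalBy (p : List ℤ) (e : List ℤ × ℤ[i]) : Bool :=
  e.1.head? == some 1 && e.1.all (fun c => c == 0 || c == 1) && divides p.tail e.1 &&
    isApproxRoot p.tail e.2

theorem isExceptionalBy_exceptionalWitnesses :
    all₂ isExceptionalBy exceptional exceptionalWitnesses := by decide +kernel

theorem exists_eq_of_mem_exceptional : ∀ p ∈ exceptional, p = 1 :: (p.tail.dropLast ++ [1]) ∧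
    (∀ c ∈ p, c = 1 ∨ c = -1) ∧ p.length ≤ 13 ∧ p.reverse = p := by decide

theorem natDegree_ofList_one_cons (l : List ℤ) :
    (ofList (1 :: (l ++ [1]))).natDegree = (l ++ [1]).length := by
  rw [List.length_append]
  exact natDegree_ofList_append_one (1 :: l)

theorem isLittlewood_ofList {l : List ℤ} (hl : ∀ c ∈ l ++ [1], c = 1 ∨ c = -1) :
    IsLittlewood (ofList (l ++ [1])) := by
  refine ⟨(monic_ofList_append_one l).ne_zero, fun i hi => ?_⟩
  rw [natDegree_ofList_append_one] at hi
  rw [coeff_ofList, List.getD_eq_getElem _ _ (by simpa using Nat.lt_succ_of_le hi)]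
  exact hl _ (List.getElem_mem _)

theorem not_isCyclotomicProduct_of_isApproxRoot {q : List ℤ} {z : ℤ[i]}
    (hP : (ofList (1 :: q)).Monic) (hd : (ofList (1 :: q)).natDegree = q.length) (hq : q ≠ [])
    (h : isApproxRoot q z) : ¬ IsCyclotomicProduct (ofList (1 :: q)) := by
  intro hC
  obtain ⟨α, hroot, hα⟩ := exists_root_of_isApproxRoot hP hd hq h
  simp only [isApproxRoot, Bool.and_eq_true, decide_eq_true_eq] at h
  exact (norm_lt_one_of_near_point h.1.1 hα).ne (hC.norm_eq_one hroot)

theorem properties_of_mem_exceptional {p : List ℤ} (hp : p ∈ exceptional) :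
    (ofList p).Monic ∧ (ofList p).natDegree ≤ 12 ∧ IsLittlewood (ofList p) ∧
      (∃ N, IsNewman N ∧ ofList p ∣ N) ∧ ¬ IsCyclotomicProduct (ofList p) := by
  obtain ⟨⟨N, z⟩, h⟩ := exists_of_all₂ isExceptionalBy_exceptionalWitnesses hp
  obtain ⟨heq, hsigns, hlength, -⟩ := exists_eq_of_mem_exceptional p hp
  generalize p.tail.dropLast = l at heq
  subst heq
  simp only [isExceptionalBy, Bool.and_eq_true, List.tail_cons, beq_iff_eq, List.all_eq_true,
    Bool.or_eq_true] at h
  obtain ⟨⟨⟨hhead, hN⟩, hdvd⟩, hroot⟩ := h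
  obtain ⟨N, rfl⟩ := List.head?_eq_some_iff.mp hhead
  have hmonic : (ofList (1 :: (l ++ [1]))).Monic := monic_ofList_append_one (1 :: l)
  have hdegree := natDegree_ofList_one_cons l
  exact ⟨hmonic, hdegree ▸ Nat.le_of_lt_succ hlength, isLittlewood_ofList (l := 1 :: l) hsigns,
    ⟨_, isNewman_ofList_cons fun c hc => hN c (List.mem_cons_of_mem _ hc), dvd_of_divides hdvd⟩,
    not_isCyclotomicProduct_of_isApproxRoot hmonic hdegree (by simp) hroot⟩

end Exceptional

section Classification

/-- Whether `p` is palindromic and either exceptional or the coefficient list of a divisor of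
`(X ^ n - 1) ^ 2` for `n = 2 * p.length`, or else whether the approximate roots `h.2` of `p`, or of
its reversal if `h.1`, show that `ofList p` has no Newman multiple. In the degrees considered, the
candidates that are products of cyclotomic polynomials have at most double roots, of orders dividing
`2 * p.length`. -/
def isSettledBy (p : List ℤ) (h : Bool × List ℤ[i]) : Bool :=
  if h.2 = [] then
    decide (p.reverse = p) &&
      (exceptional.contains p || divides p.tail (sqXPowSubOne (2 * p.length)))
  else excludes h.2 (if h.1 then p.reverse.tail else p.tail)

theorem mem_exceptional_or_of_isSettledBy {l : List ℤ} {h : Bool × List ℤ[i]}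
    (hl : isSettledBy (1 :: (l ++ [1])) h) :
    ((1 :: (l ++ [1])).reverse = 1 :: (l ++ [1]) ∧
      (1 :: (l ++ [1]) ∈ exceptional ∨ IsCyclotomicProduct (ofList (1 :: (l ++ [1]))))) ∨
    NoNewmanMultiple (ofList (1 :: (l ++ [1]))) := by
  have noMultiple {m : List ℤ} (hm : excludes h.2 (m ++ [1])) :
      NoNewmanMultiple (ofList (1 :: (m ++ [1]))) :=
    noNewmanMultiple_of_excludes (monic_ofList_append_one (1 :: m)) (natDegree_ofList_one_cons m)
      (by simp) hm
  have hreverse : (1 :: (l ++ [1])).reverse = 1 :: (l.reverse ++ [1]) := by simp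
  rw [isSettledBy] at hl
  split_ifs at hl with hnil hrev
  · left
    simp only [Bool.and_eq_true, decide_eq_true_eq, Bool.or_eq_true, List.contains_iff_mem] at hl
    refine ⟨hl.1, hl.2.imp_right fun hdvd => ?_⟩
    have hpos : 0 < 2 * (1 :: (l ++ [1])).length := by simp
    have hcyc := isCyclotomicProduct_X_pow_sub_one hpos
    refine (hcyc.mul hcyc).of_dvd (monic_ofList_append_one (1 :: l)) ?_
    exact ofList_sqXPowSubOne hpos ▸ dvd_of_divides hdvd
  · right
    apply noNewmanMultiple_of_reverse
    rw [reverse_ofList_append_one, hreverse]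
    rw [hreverse] at hl
    exact noMultiple hl
  · exact .inr (noMultiple hl)

/-- Approximate roots for the lists `candidates [] n`, or of their reversals, for the check
`isSettledBy`. -/
def witnesses : ℕ → List (Bool × List ℤ[i])
  | 0 => [
    (false, [])]
  | 1 => [
    (false, []), (false, [])]
  | 2 => [
    (true, [⟨-54368901, 0⟩]), (false, [])]
  | 3 => [
    (false, [⟨69244040, 31814796⟩]), (false, []), (false, [⟨43338020, 52582717⟩]),
    (false, [⟨-58069183, 0⟩]), (false, [])]
  | 4 => [
    (false, [⟨62481053, 30024259⟩]), (true, [⟨-50866039, 0⟩]), (false, []),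
    (false, [⟨45521601, 49160334⟩]), (false, []), (false, [⟨-55791045, 0⟩]), (false, [])]
  | 5 => [
    (false, [⟨75487767, 0⟩]), (false, [⟨74063599, 18225173⟩]), (false, [⟨72783843, 28701774⟩]),
    (false, [⟨60181390, 28329719⟩]), (true, [⟨-60181390, 28329719⟩]), (false, []),
    (true, [⟨-47660102, 47742392⟩]), (true, [⟨-68232780, 0⟩, ⟨-75487767, 0⟩]),
    (false, [⟨42500692, 56596724⟩]), (false, [⟨47660102, 47742392⟩]), (false, []),
    (true, [⟨-27954987, 64829880⟩]), (false, [⟨-51364860, 0⟩]), (false, [⟨-56984029, 0⟩]),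
    (false, [⟨-42500692, 56596724⟩]), (false, [])]
  | 6 => [
    (false, [⟨68047390, 8728012⟩]), (false, [⟨69400367, 19054975⟩]),
    (false, [⟨68357787, 26068617⟩]), (false, [⟨64275288, 29962377⟩]),
    (false, [⟨59338389, 27158111⟩]), (true, [⟨-32468015, 59471192⟩]), (true, [⟨-50201706, 0⟩]),
    (true, [⟨36372948, 67973332⟩, ⟨-87762789, 0⟩]), (false, [⟨64325959, 37434011⟩]),
    (false, [⟨26295043, 63695775⟩]), (true, [⟨-37992271, 52022877⟩]), (true, [⟨-54368901, 0⟩]),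
    (false, [⟨44462835, 50825946⟩]), (false, [⟨49562305, 47507355⟩]),
    (false, [⟨-62609204, 0⟩, ⟨85922481, 29631029⟩]), (true, [⟨-53448981, 0⟩]),
    (true, [⟨0, 73735271⟩]), (false, [⟨-51103509, 0⟩]), (false, []), (false, [⟨-56278138, 0⟩]),
    (false, [⟨-30559646, 65906444⟩]), (false, [⟨-41928649, 54130814⟩]), (false, [])]
  | 7 => [
    (false, [⟨90978515, 0⟩]), (false, [⟨88689864, 0⟩]), (false, [⟨85179964, 0⟩]),
    (false, [⟨79589518, 0⟩]), (false, [⟨66130179, 10247289⟩]), (false, [⟨82465724, 0⟩]),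
    (false, [⟨76677358, 10474371⟩]), (false, [⟨75390820, 16461202⟩]),
    (false, [⟨67332243, 18795033⟩]), (false, [⟨79105988, 20277925⟩]),
    (false, [⟨75938611, 27658021⟩]), (false, [⟨66654665, 24566825⟩]),
    (false, [⟨67121185, 34921650⟩]), (false, [⟨63805445, 28119120⟩]),
    (false, [⟨60944670, 28641558⟩]), (false, [⟨59080811, 26385730⟩]),
    (false, [⟨83021823, 14171771⟩]), (true, [⟨-54662418, 0⟩]), (true, [⟨30055737, 63938100⟩]),
    (false, [⟨73535404, 26582120⟩]), (true, [⟨-59080811, 26385730⟩]), (false, []),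
    (true, [⟨-51075293, 48181695⟩]), (true, [⟨-66130179, 10247289⟩]),
    (true, [⟨40939281, 55205704⟩]), (false, [⟨64395463, 35579207⟩]),
    (false, [⟨29089919, 59452974⟩]), (false, [⟨26519533, 62611762⟩]), (true, [⟨-51797018, 0⟩]),
    (false, []), (true, [⟨-15507965, 72607626⟩]), (false, [⟨36744130, 54742563⟩]),
    (true, [⟨-38968140, 60395820⟩]), (false, [⟨44297656, 52231804⟩]),
    (false, [⟨46635481, 48464708⟩]), (false, [⟨51075293, 48181695⟩]),
    (true, [⟨-39708687, 61434538⟩]), (false, [⟨-59710681, 0⟩]),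
    (true, [⟨8483259, 77496672⟩, ⟨-78265285, 0⟩]), (false, []), (true, [⟨-42259939, 49608714⟩]),
    (true, [⟨-58862258, 0⟩]), (false, [⟨-75938611, 27658021⟩, ⟨74975651, 37143286⟩]),
    (false, [⟨-53675946, 0⟩]), (false, [⟨-50307045, 0⟩]), (false, [⟨-51235311, 0⟩]),
    (true, [⟨-37410038, 52404338⟩]), (false, [⟨-54612703, 0⟩]), (false, [⟨-56663658, 0⟩]),
    (false, []), (false, [⟨-30055737, 63938100⟩]), (false, [⟨-46635481, 48464708⟩]),
    (false, [⟨-40939281, 55205704⟩]), (false, [⟨-74420266, 0⟩, ⟨-11737659, 79328983⟩]), (false, [])]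
  | 8 => [
    (false, [⟨86049925, 0⟩]), (false, [⟨82988535, 0⟩]), (false, [⟨78502744, 0⟩]),
    (false, [⟨69770829, 2983399⟩]), (false, [⟨68598716, 7764154⟩]), (false, [⟨65077231, 10719029⟩]),
    (false, [⟨73186218, 5769559⟩]), (false, [⟨73148291, 12527945⟩]),
    (false, [⟨72057390, 16465882⟩]), (false, [⟨70241661, 18639239⟩]),
    (false, [⟨66296678, 18406666⟩]), (false, [⟨74629271, 19764129⟩]),
    (false, [⟨72853251, 24280760⟩]), (false, [⟨69552379, 26166298⟩]),
    (false, [⟨65909995, 23578625⟩]), (false, [⟨69244040, 31814796⟩]),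
    (false, [⟨65027342, 30723967⟩]), (false, [⟨63713303, 26987991⟩]),
    (false, [⟨61293987, 30513586⟩]), (false, [⟨61126933, 27853278⟩]),
    (false, [⟨59662130, 27447151⟩]), (false, [⟨59074522, 25894692⟩]),
    (false, [⟨78975877, 15957591⟩]), (false, [⟨79979335, 20050736⟩]), (true, [⟨-57525196, 0⟩]),
    (true, [⟨38021559, 53846053⟩]), (false, [⟨72112452, 25413108⟩]),
    (true, [⟨-33566207, 61087661⟩]), (true, [⟨-50049312, 0⟩]),
    (true, [⟨40405375, 66631412⟩, ⟨-83518069, 0⟩]), (false, [⟨73537062, 30298708⟩]),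
    (true, [⟨-67925578, 0⟩, ⟨-60139369, 47525708⟩]), (false, []), (true, [⟨-38973766, 51606485⟩]),
    (true, [⟨-54021686, 0⟩]), (false, [⟨64987456, 38339946⟩]), (false, [⟨64771497, 34401843⟩]),
    (false, [⟨29380194, 59021827⟩]), (false, [⟨30806167, 63080519⟩]),
    (false, [⟨26864502, 64893968⟩]), (false, [⟨27183204, 62379061⟩]),
    (false, [⟨38787690, 60335539⟩]), (true, [⟨-45688031, 46340158⟩]), (true, [⟨-61152126, 0⟩]),
    (true, [⟨42902090, 58059246⟩]), (true, [⟨-60087380, 44659060⟩]),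
    (false, [⟨37029472, 52214018⟩]), (false, [⟨36377446, 54324434⟩]),
    (false, [⟨40051468, 54916118⟩]), (false, [⟨38431312, 59031586⟩]),
    (false, [⟨41791442, 49841911⟩]), (false, [⟨43338020, 52582717⟩]),
    (false, [⟨46343328, 49239057⟩]), (false, [⟨48618686, 47667038⟩]),
    (false, [⟨51778355, 49655358⟩]), (false, [⟨85278127, 18653550⟩, ⟨-85278127, 18653550⟩]),
    (false, [⟨-59417756, 0⟩]), (true, [⟨-61067734, 0⟩]),
    (false, [⟨79592103, 26976785⟩, ⟨-62949698, 0⟩]), (true, [⟨-28738059, 59869743⟩]),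
    (true, [⟨-50695458, 0⟩]), (false, [⟨-60620408, 29391483⟩]), (false, []),
    (true, [⟨-37168967, 55220858⟩]), (true, [⟨-55473781, 0⟩]),
    (false, [⟨-74658726, 35215386⟩, ⟨74658726, 35215386⟩]), (false, [⟨-52189173, 0⟩]),
    (false, [⟨-54499335, 0⟩]), (false, [⟨-53552582, 0⟩]), (false, [⟨-50253714, 0⟩]),
    (false, [⟨-51717180, 0⟩]), (false, [⟨-51167253, 0⟩]), (false, [⟨-58515169, 0⟩]),
    (true, [⟨-15267465, 71406001⟩]), (false, [⟨-54477930, 0⟩]), (false, [⟨-58069183, 0⟩]),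
    (false, [⟨-56441160, 0⟩]), (false, []), (true, [⟨9602560, 79412550⟩, ⟨-75649758, 0⟩]),
    (true, [⟨-42707406, 49312313⟩]), (false, [⟨-29056444, 64624665⟩]),
    (false, [⟨-46786243, 47730151⟩]), (false, [⟨-37837517, 52593098⟩]),
    (false, [⟨-42053798, 55395518⟩]), (false, [⟨0, 76203139⟩]),
    (false, [⟨-13049521, 76566422⟩, ⟨-72605067, 0⟩]), (false, [])]
  | 9 => [
    (false, [⟨94807468, 0⟩]), (false, [⟨94176874, 0⟩]), (false, [⟨93422450, 0⟩]),
    (false, [⟨92532040, 0⟩]), (false, [⟨91512623, 0⟩]), (false, [⟨83093740, 0⟩]),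
    (false, [⟨93293408, 0⟩]), (false, [⟨92250173, 0⟩]), (false, [⟨90972197, 0⟩]),
    (false, [⟨89472531, 0⟩]), (false, [⟨79700407, 0⟩]), (false, [⟨90643963, 0⟩]),
    (false, [⟨60643463, 0⟩]), (false, [⟨86377107, 0⟩]), (false, [⟨74589425, 0⟩]),
    (false, [⟨85335169, 0⟩]), (false, [⟨81517529, 0⟩]), (false, [⟨68350246, 5554093⟩]),
    (false, [⟨71737646, 2128681⟩]), (false, [⟨67375904, 8562309⟩]), (false, [⟨66478901, 9916956⟩]),
    (false, [⟨64470329, 10860680⟩]), (false, [⟨91885253, 0⟩]), (false, [⟨90161029, 0⟩]),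
    (false, [⟨87756967, 0⟩]), (false, [⟨69174059, 0⟩]), (false, [⟨71475292, 7765466⟩]),
    (false, [⟨86660069, 0⟩]), (false, [⟨78377051, 2978830⟩]), (false, [⟨77399385, 9010378⟩]),
    (false, [⟨71404735, 12955840⟩]), (false, [⟨78427385, 11913701⟩]),
    (false, [⟨76536378, 15583892⟩]), (false, [⟨70520494, 16164130⟩]),
    (false, [⟨73742852, 19398654⟩]), (false, [⟨69120322, 17998544⟩]),
    (false, [⟨67806026, 18722858⟩]), (false, [⟨65756008, 18058132⟩]),
    (false, [⟨81627336, 9443672⟩]), (false, [⟨81855405, 14537525⟩]),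
    (false, [⟨80523103, 18913932⟩]), (false, [⟨72690138, 19084196⟩]),
    (true, [⟨-61922681, 30140530⟩]), (false, [⟨78906507, 27881676⟩, ⟨-74728118, 33808544⟩]),
    (false, [⟨71478718, 22689416⟩]), (false, [⟨71175348, 29964812⟩]),
    (false, [⟨69142540, 24597138⟩]), (false, [⟨67211268, 24773285⟩]),
    (false, [⟨65597785, 22902351⟩]), (false, [⟨64608402, 40663666⟩]),
    (false, [⟨66549752, 36491582⟩]), (false, [⟨70017166, 29121966⟩]),
    (false, [⟨65894662, 29660559⟩]), (false, [⟨64137415, 28591465⟩]),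
    (false, [⟨63808964, 26267658⟩]), (false, [⟨61922681, 30140530⟩]),
    (false, [⟨61060855, 29033908⟩]), (false, [⟨61384768, 27379915⟩]),
    (false, [⟨59581385, 28337565⟩]), (false, [⟨59880653, 27109327⟩]),
    (false, [⟨59205244, 26601931⟩]), (false, [⟨59169169, 25600295⟩]), (false, [⟨88586019, 0⟩]),
    (false, [⟨83271172, 4998084⟩]), (false, [⟨83673796, 9576655⟩]), (false, [⟨83463840, 12864523⟩]),
    (false, [⟨76822145, 16234361⟩]), (false, [⟨85101557, 10707854⟩]), (true, [⟨-50849671, 0⟩]),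
    (true, [⟨41221974, 61306727⟩]), (false, [⟨77587047, 19664210⟩]), (false, [⟨326020, 71534750⟩]),
    (false, [⟨683663, 75123245⟩]), (false, [⟨77488781, 22751172⟩]), (false, [⟨76279939, 25279278⟩]),
    (false, [⟨74361549, 26522477⟩]), (false, [⟨71412704, 24520762⟩]),
    (false, [⟨88489753, 14573507⟩, ⟨43265249, 64233250⟩]), (true, [⟨-54933959, 0⟩]),
    (true, [⟨29837850, 65194532⟩]), (true, [⟨-2887282, 76237507⟩]), (true, [⟨-59169169, 25600295⟩]),
    (false, []), (true, [⟨-50940953, 50963293⟩]), (true, [⟨-64470329, 10860680⟩]),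
    (true, [⟨41623935, 54742599⟩]), (false, [⟨72929400, 28815726⟩]),
    (false, [⟨54767953, 55689726⟩, ⟨-14281299, 81461557⟩]), (true, [⟨-27567120, 62717593⟩]),
    (true, [⟨-51922467, 0⟩]), (false, [⟨-28007143, 74609833⟩, ⟨75365720, 40862137⟩]),
    (true, [⟨-14419711, 74563228⟩]), (true, [⟨-65597785, 22902351⟩]),
    (false, [⟨66387111, 43352636⟩, ⟨-14366736, 85846659⟩]), (true, [⟨-38815524, 58267192⟩]),
    (false, [⟨66325501, 37739842⟩]), (false, [⟨64619761, 36214284⟩]),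
    (false, [⟨65269513, 33671430⟩]), (false, [⟨32043605, 58147847⟩]),
    (false, [⟨30895509, 60535367⟩]), (false, [⟨29106256, 59974471⟩]),
    (false, [⟨29720806, 59036454⟩]), (false, [⟨35480327, 66443981⟩]),
    (false, [⟨31604442, 63133979⟩]), (true, [⟨-59503893, 0⟩]), (false, [⟨26086163, 63158255⟩]),
    (false, [⟨27567120, 62717593⟩]), (false, [⟨41814512, 58001105⟩]),
    (false, [⟨38993124, 59521153⟩]), (true, [⟨-50389025, 0⟩]), (false, []),
    (false, [⟨35906452, 63491560⟩]), (false, [⟨50121382, 59820439⟩, ⟨11695374, 79034611⟩]),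
    (true, [⟨-36992075, 51963841⟩]), (true, [⟨-54832917, 0⟩]), (true, [⟨44506200, 51488928⟩]),
    (false, [⟨70566315, 39905536⟩, ⟨31050489, 75361202⟩]), (false, [⟨37982654, 51257704⟩]),
    (false, [⟨36992075, 51963841⟩]), (false, [⟨37971700, 53470476⟩]),
    (false, [⟨36453012, 54001158⟩]), (false, [⟨41375439, 52780751⟩]),
    (false, [⟨39897941, 54394370⟩]), (false, [⟨42416068, 56913257⟩]),
    (false, [⟨40585724, 61047499⟩]), (false, [⟨38815524, 58267192⟩]),
    (false, [⟨41785590, 48359339⟩]), (false, [⟨41507221, 49692056⟩]),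
    (false, [⟨43441663, 50081688⟩]), (false, [⟨42854990, 52211666⟩]),
    (false, [⟨45137616, 47504875⟩]), (false, [⟨45796255, 49371847⟩]),
    (false, [⟨48208339, 48124759⟩]), (false, [⟨50278492, 47867997⟩]),
    (false, [⟨50940953, 50963293⟩]), (false, [⟨87649219, 8249529⟩]),
    (true, [⟨-44358857, 49173357⟩]), (true, [⟨-59627252, 0⟩]),
    (false, [⟨82715515, 18754315⟩, ⟨-76536378, 15583892⟩]), (true, [⟨-29964709, 62001391⟩]),
    (false, [⟨-58695243, 0⟩]), (false, [⟨-59589567, 0⟩]),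
    (false, [⟨-64687444, 0⟩, ⟨-23699888, 85295144⟩]), (true, [⟨-39130692, 53945284⟩]),
    (true, [⟨-54980403, 0⟩]), (false, [⟨78433714, 25882648⟩, ⟨-63347221, 0⟩]),
    (false, [⟨-64137415, 28591465⟩]), (true, [⟨-54034455, 0⟩]), (true, [⟨-5461793, 72490217⟩]),
    (false, [⟨-59581385, 28337565⟩]), (true, [⟨-48070324, 46560104⟩]),
    (false, [⟨-60533394, 31682452⟩]), (false, [⟨-61060855, 29033908⟩]),
    (true, [⟨-24985608, 65395249⟩]), (true, [⟨-51462355, 0⟩]), (true, [⟨-11958206, 70692253⟩]),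
    (false, [⟨-71175348, 29964812⟩]), (false, [⟨-67211268, 24773285⟩]), (true, [⟨-57211126, 0⟩]),
    (false, [⟨74728118, 33808544⟩, ⟨-78906507, 27881676⟩]), (false, [⟨-52916694, 0⟩]),
    (false, [⟨-51919284, 0⟩]), (false, [⟨-52233646, 0⟩]), (false, [⟨-54587268, 0⟩]),
    (false, [⟨-53184550, 0⟩]), (false, [⟨-53618117, 0⟩]), (false, [⟨-50726023, 0⟩]),
    (false, [⟨-50074301, 0⟩]), (false, [⟨-50280414, 0⟩]), (false, [⟨-51758242, 0⟩]),
    (false, [⟨-50945425, 0⟩]), (false, [⟨-51201913, 0⟩]), (false, [⟨-61499219, 0⟩]),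
    (false, [⟨-58714603, 0⟩]), (true, [⟨-45431846, 46523407⟩]), (false, [⟨-61538018, 0⟩]),
    (true, [⟨3564212, 82590237⟩, ⟨-60544413, 45771925⟩]), (false, [⟨-55571015, 0⟩]),
    (false, [⟨-54550767, 0⟩]), (false, [⟨-58271558, 0⟩]), (false, [⟨-55847357, 0⟩]),
    (false, [⟨-56565152, 0⟩]), (false, []), (false, [⟨-41221974, 61306727⟩]),
    (true, [⟨-44506200, 51488928⟩]), (true, [⟨-75365720, 40862137⟩, ⟨28007143, 74609833⟩]),
    (false, [⟨-29106256, 59974471⟩]), (false, [⟨-31959574, 59397842⟩]),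
    (true, [⟨-37257998, 54787277⟩]), (false, [⟨-29837850, 65194532⟩]),
    (false, [⟨-42376807, 49233029⟩]), (false, [⟨-50278492, 47867997⟩]),
    (false, [⟨-46392246, 47988387⟩]), (false, [⟨-37761489, 52296601⟩]),
    (false, [⟨-40585724, 61047499⟩]), (false, [⟨-41623935, 54742599⟩]),
    (false, [⟨7540920, 80737906⟩, ⟨-77554708, 0⟩]), (false, [⟨-683663, 75123245⟩]),
    (false, [⟨-67513009, 0⟩, ⟨-27452414, 84311658⟩]),
    (false, [⟨-11403306, 76068022⟩, ⟨-73875194, 0⟩]),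
    (false, [⟨-66387111, 43352636⟩, ⟨14366736, 85846659⟩]), (false, [])]
  | 10 => [
    (false, [⟨91558967, 0⟩]), (false, [⟨90688279, 0⟩]), (false, [⟨89715816, 0⟩]),
    (false, [⟨88665178, 0⟩]), (false, [⟨87582431, 0⟩]), (false, [⟨86528798, 0⟩]),
    (false, [⟨81213535, 0⟩]), (false, [⟨89439822, 0⟩]), (false, [⟨88115352, 0⟩]),
    (false, [⟨86644863, 0⟩]), (false, [⟨85112018, 0⟩]), (false, [⟨83637454, 0⟩]),
    (false, [⟨77667824, 0⟩]), (false, [⟨86049126, 0⟩]), (false, [⟨83903355, 0⟩]),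
    (false, [⟨81617543, 0⟩]), (false, [⟨79432180, 0⟩]), (false, [⟨71981802, 0⟩]),
    (false, [⟨80123227, 0⟩]), (false, [⟨65794407, 0⟩]), (false, [⟨70324724, 0⟩]),
    (false, [⟨67535087, 6372706⟩]), (false, [⟨69950716, 5341993⟩]), (false, [⟨68976625, 7296518⟩]),
    (false, [⟨66683179, 8850853⟩]), (false, [⟨67847577, 9256126⟩]), (false, [⟨65898135, 10030280⟩]),
    (false, [⟨65292791, 10589303⟩]), (false, [⟨64111406, 10882223⟩]), (false, [⟨87307187, 0⟩]),
    (false, [⟨84979282, 0⟩]), (false, [⟨81878248, 0⟩]), (false, [⟨77223167, 0⟩]),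
    (false, [⟨73561606, 4738823⟩]), (false, [⟨70466133, 8473196⟩]), (false, [⟨78615138, 0⟩]),
    (false, [⟨75551640, 7428632⟩]), (false, [⟨74709962, 10418166⟩]),
    (false, [⟨73644249, 12085035⟩]), (false, [⟨70430485, 12997286⟩]),
    (false, [⟨75397346, 12665912⟩]), (false, [⟨74105223, 15081693⟩]),
    (false, [⟨72645960, 16258587⟩]), (false, [⟨69700197, 15850220⟩]),
    (false, [⟨72391292, 18069284⟩]), (false, [⟨70782648, 18642167⟩]),
    (false, [⟨68532058, 17530570⟩]), (false, [⟨69029591, 19463233⟩]),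
    (false, [⟨67395004, 18258020⟩]), (false, [⟨66565537, 18433338⟩]),
    (false, [⟨65475536, 17779729⟩]), (false, [⟨78318386, 11608966⟩]),
    (false, [⟨78154766, 15142367⟩]), (false, [⟨77114303, 17897005⟩]),
    (false, [⟨75420070, 19492779⟩]), (false, [⟨71692762, 18514653⟩]),
    (false, [⟨78765195, 20010207⟩]), (false, [⟨76787659, 23444876⟩]),
    (false, [⟨73825413, 24491241⟩]), (false, [⟨70810226, 21696411⟩]),
    (false, [⟨72723101, 27761624⟩]), (false, [⟨70101668, 26706696⟩]),
    (false, [⟨68975890, 23593384⟩]), (false, [⟨67647955, 26337594⟩]),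
    (false, [⟨67239228, 24013731⟩]), (false, [⟨66188483, 23768455⟩]),
    (false, [⟨65499847, 22436823⟩]), (false, [⟨63843107, 42230781⟩]), (true, [⟨-53698006, 0⟩]),
    (false, [⟨69335586, 33295324⟩]), (false, [⟨70309151, 27358504⟩]),
    (false, [⟨64949382, 33312167⟩]), (false, [⟨64909543, 31335429⟩]),
    (false, [⟨66678355, 28903313⟩]), (false, [⟨64643375, 28135474⟩]),
    (false, [⟨63849237, 27306838⟩]), (false, [⟨63988573, 25813471⟩]),
    (false, [⟨60976968, 31837384⟩]), (false, [⟨61136533, 30815535⟩]),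
    (false, [⟨62481053, 30024259⟩]), (false, [⟨61452210, 28895202⟩]),
    (false, [⟨61134795, 28113367⟩]), (false, [⟨61651895, 27121675⟩]),
    (false, [⟨59854300, 28244833⟩]), (false, [⟨59652796, 27643323⟩]),
    (false, [⟨60096277, 26943350⟩]), (false, [⟨59031728, 27058664⟩]),
    (false, [⟨59378573, 26459966⟩]), (false, [⟨59104853, 26043594⟩]),
    (false, [⟨59290771, 25441336⟩]), (false, [⟨79954560, 4117755⟩]), (false, [⟨80476055, 8736490⟩]),
    (false, [⟨80580987, 11603789⟩]), (false, [⟨80228802, 13813173⟩]),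
    (false, [⟨79455277, 15437716⟩]), (false, [⟨75569512, 16130198⟩]),
    (false, [⟨81822962, 12661880⟩]), (false, [⟨82074455, 15338021⟩]),
    (false, [⟨81710422, 17700838⟩]), (false, [⟨80660299, 19524324⟩]),
    (false, [⟨76271030, 19167760⟩]), (false, [⟨687568, 71732124⟩]), (true, [⟨-51369515, 0⟩]),
    (false, [⟨-2539129, 75092362⟩]), (false, [⟨76252100, 21813402⟩]),
    (false, [⟨5895688, 72242990⟩]), (false, [⟨4237138, 74402067⟩]), (false, [⟨75402328, 23980719⟩]),
    (false, [⟨73947599, 25234048⟩]), (false, [⟨72584654, 25517078⟩]),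
    (false, [⟨71086576, 23849007⟩]), (true, [⟨4719173, 78245604⟩, ⟨-70570394, 0⟩]),
    (true, [⟨-43067500, 47961351⟩]), (true, [⟨-57305364, 0⟩]), (true, [⟨38273148, 54074024⟩]),
    (false, [⟨78565776, 22527684⟩]), (true, [⟨-32484807, 61001808⟩]), (true, [⟨-50012243, 0⟩]),
    (true, [⟨40808772, 70682866⟩, ⟨-81617543, 0⟩]), (false, [⟨79017524, 25440386⟩]),
    (true, [⟨-66973079, 0⟩, ⟨-61496186, 45668827⟩]),
    (true, [⟨-25075842, 81026306⟩, ⟨68363384, 53682892⟩, ⟨-94496083, 0⟩]),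
    (true, [⟨-39074522, 52083846⟩]), (true, [⟨-53926640, 0⟩]), (true, [⟨44173338, 49959295⟩]),
    (false, [⟨72723101, 27761624⟩]), (false, [⟨53909320, 55012698⟩, ⟨-16568086, 82694764⟩]),
    (true, [⟨-53042140, 0⟩]), (true, [⟨26218444, 64620700⟩]), (true, [⟨-848310, 73423009⟩]),
    (true, [⟨-59117952, 31635858⟩]), (true, [⟨-46140366, 46140366⟩]), (true, [⟨-60617537, 0⟩]),
    (true, [⟨44211994, 58470756⟩]), (true, [⟨-59617177, 43137514⟩]), (true, [⟨-60990751, 0⟩]),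
    (true, [⟨-28220266, 67123375⟩]), (true, [⟨-50866039, 0⟩]),
    (false, [⟨68624220, 40741225⟩, ⟨-14066486, 77942935⟩]),
    (true, [⟨-10077625, 74923107⟩, ⟨-68589838, 0⟩]), (false, [⟨64170719, 41018096⟩]),
    (false, [⟨64634723, 38956052⟩]), (true, [⟨-44162882, 53250396⟩]),
    (false, [⟨65446640, 36109518⟩]), (false, [⟨64794974, 34848852⟩]),
    (false, [⟨65797021, 33261822⟩]), (false, [⟨32260415, 58278381⟩]),
    (false, [⟨31095704, 60860570⟩]), (false, [⟨29160300, 60243332⟩]),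
    (false, [⟨29121171, 59190450⟩]), (false, [⟨29826631, 59249797⟩]),
    (true, [⟨-28382176, 59528824⟩]), (true, [⟨-50650045, 0⟩]), (false, [⟨30171911, 63424922⟩]),
    (false, [⟨31909148, 63704421⟩]), (false, [⟨24537564, 65565590⟩]),
    (false, [⟨26800004, 66145723⟩]), (false, [⟨25855624, 63427091⟩]),
    (false, [⟨26733664, 62338764⟩]), (false, [⟨27445088, 63084790⟩]),
    (false, [⟨42060709, 57488670⟩]), (true, [⟨-54368901, 0⟩]), (false, [⟨39496444, 59265289⟩]),
    (true, [⟨-58654775, 27256042⟩]), (true, [⟨-50923382, 46174190⟩]),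
    (true, [⟨-70466133, 8473196⟩]), (true, [⟨40479800, 55174597⟩]), (false, [⟨36693185, 63872155⟩]),
    (false, [⟨51704848, 55327013⟩]), (true, [⟨-25802439, 62149824⟩]), (true, [⟨-51656061, 0⟩]),
    (false, []), (true, [⟨-16384981, 71436191⟩]), (true, [⟨-66560120, 27745964⟩]),
    (true, [⟨-37090712, 62374222⟩]), (true, [⟨-57776442, 0⟩]), (true, [⟨46532574, 48869180⟩]),
    (false, [⟨71699805, 38712350⟩, ⟨27087935, 76848890⟩]), (false, [⟨38053075, 51117879⟩]),
    (false, [⟨37875954, 52146573⟩]), (false, [⟨37100248, 51851186⟩]),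
    (false, [⟨39301158, 53685240⟩]), (false, [⟨38135206, 53299481⟩]),
    (false, [⟨37509995, 54655843⟩]), (false, [⟨36503214, 54593078⟩]),
    (false, [⟨36645855, 53913328⟩]), (false, [⟨42724043, 52025906⟩]),
    (false, [⟨41400254, 52475195⟩]), (false, [⟨41751557, 54293868⟩]),
    (false, [⟨40083916, 54110675⟩]), (false, [⟨45711885, 55417142⟩]),
    (false, [⟨42698534, 56247823⟩]), (true, [⟨-54368901, 0⟩]), (false, [⟨38559546, 59854789⟩]),
    (false, [⟨39381685, 58096890⟩]), (false, [⟨42295792, 47711999⟩]),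
    (false, [⟨41712409, 48216929⟩]), (false, [⟨42285592, 49047618⟩]),
    (false, [⟨41466418, 49501364⟩]), (false, [⟨44162229, 48990747⟩]),
    (false, [⟨43310802, 49840774⟩]), (false, [⟨44309109, 51119921⟩]),
    (false, [⟨42834842, 51847255⟩]), (false, [⟨45238196, 46477499⟩]),
    (false, [⟨44934730, 47405069⟩]), (false, [⟨46106376, 47898323⟩]),
    (false, [⟨45521601, 49160334⟩]), (false, [⟨47776911, 46615240⟩]),
    (false, [⟨47805509, 48098254⟩]), (false, [⟨49774052, 48050044⟩]),
    (false, [⟨51394975, 48866097⟩]), (false, [⟨49906460, 50842560⟩]),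
    (false, [⟨84919598, 10741133⟩]), (false, [⟨85641167, 12779554⟩]),
    (true, [⟨-37795169, 53631281⟩]), (true, [⟨-55245259, 0⟩]), (false, [⟨81179308, 18492557⟩]),
    (true, [⟨-2981418, 72731216⟩]), (false, [⟨-58614537, 0⟩]), (false, [⟨-60108678, 0⟩]),
    (false, [⟨-59486308, 0⟩]), (true, [⟨-27635838, 65096063⟩]), (true, [⟨-51591590, 0⟩]),
    (true, [⟨-10782738, 73065205⟩]), (true, [⟨-69059156, 25712361⟩]),
    (true, [⟨-41974653, 57565307⟩]), (true, [⟨-57682210, 0⟩]),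
    (false, [⟨77799472, 24999226⟩, ⟨-63091064, 0⟩]), (false, [⟨-63615339, 28933382⟩]),
    (true, [⟨-41860439, 48509478⟩]), (true, [⟨-58141672, 0⟩]),
    (false, [⟨83995231, 22414103⟩, ⟨-65322079, 35448615⟩]), (true, [⟨-33508379, 58772895⟩]),
    (true, [⟨-50163209, 0⟩]), (false, [⟨-59030079, 26730106⟩]), (false, [⟨-61425962, 30201866⟩]),
    (true, [⟨-37904884, 51397179⟩]), (true, [⟨-54293561, 0⟩]), (false, [⟨-60693929, 29134832⟩]),
    (true, [⟨-10434973, 79501300⟩, ⟨-50814191, 61715731⟩]), (true, [⟨-53376445, 0⟩]),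
    (true, [⟨0, 71320431⟩]), (true, [⟨-45356327, 47605887⟩]),
    (false, [⟨-56595644, 58162344⟩, ⟨-80492700, 0⟩]),
    (false, [⟨80513410, 29730704⟩, ⟨-72045111, 0⟩]), (true, [⟨-34305012, 65596540⟩]),
    (true, [⟨-51057011, 0⟩]), (true, [⟨-6178999, 74188600⟩]), (false, []),
    (true, [⟨-41328658, 53104282⟩]), (true, [⟨-56169860, 0⟩]),
    (false, [⟨75007087, 32770459⟩, ⟨-75007087, 32770459⟩]), (false, [⟨-52887702, 0⟩]),
    (false, [⟨-51898309, 0⟩]), (false, [⟨-52385361, 0⟩]), (false, [⟨-52210339, 0⟩]),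
    (false, [⟨-53994469, 0⟩]), (false, [⟨-54879105, 0⟩]), (false, [⟨-54538959, 0⟩]),
    (false, [⟨-53154034, 0⟩]), (false, [⟨-53837212, 0⟩]), (false, [⟨-53582810, 0⟩]),
    (false, [⟨-50480566, 0⟩]), (false, [⟨-50710480, 0⟩]), (false, [⟨-50061763, 0⟩]),
    (false, [⟨-50375030, 0⟩]), (false, [⟨-50266961, 0⟩]), (false, [⟨-51443099, 0⟩]),
    (false, [⟨-51899824, 0⟩]), (false, [⟨-51736921, 0⟩]), (false, [⟨-50929124, 0⟩]),
    (false, [⟨-51322545, 0⟩]), (false, [⟨-51184118, 0⟩]), (false, [⟨-59476077, 0⟩]),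
    (false, [⟨-61227364, 0⟩]), (false, [⟨-57587220, 0⟩]), (false, [⟨-59350346, 0⟩]),
    (false, [⟨-58596156, 0⟩]), (true, [⟨-31843754, 58017880⟩]), (false, [⟨-67174115, 9780225⟩]),
    (true, [⟨-36878180, 52072108⟩]), (true, [⟨-54788986, 0⟩]),
    (false, [⟨-64186446, 0⟩, ⟨81498721, 37155687⟩]), (false, [⟨-54935398, 0⟩]),
    (false, [⟨-55516634, 0⟩]), (false, [⟨-54050656, 0⟩]), (false, [⟨-54510840, 0⟩]),
    (false, [⟨-57126441, 0⟩]), (false, [⟨-58152121, 0⟩]), (false, [⟨-55791045, 0⟩]),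
    (false, [⟨-56963859, 0⟩]), (false, [⟨-56494461, 0⟩]), (false, [⟨-34471888, 66243205⟩]),
    (true, [⟨-44574079, 49369273⟩]), (false, [⟨-40317491, 61780595⟩]),
    (true, [⟨-29892122, 61581216⟩]), (true, [⟨-68160120, 0⟩, ⟨-17158719, 75641614⟩]),
    (true, [⟨-38931811, 54196394⟩]), (true, [⟨40808772, 70682866⟩, ⟨-81617543, 0⟩]),
    (false, [⟨-29050638, 59725609⟩]), (false, [⟨-33760517, 60440109⟩]),
    (false, [⟨-31732283, 59189152⟩]), (false, [⟨-25411726, 65165198⟩]),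
    (false, [⟨-26284206, 62881678⟩]), (true, [⟨-46531772, 57675291⟩]),
    (false, [⟨-29902136, 64484904⟩]), (false, [⟨-44716824, 51916359⟩]),
    (false, [⟨-42502515, 47967430⟩]), (false, [⟨-42470436, 49431698⟩]),
    (false, [⟨-50771327, 47599866⟩]), (false, [⟨-45636561, 46564683⟩]),
    (false, [⟨-46705518, 48070905⟩]), (false, [⟨-37000636, 54895773⟩]),
    (false, [⟨-37637254, 52442140⟩]), (true, [⟨-8544345, 73404112⟩]),
    (false, [⟨-42898966, 52730399⟩]), (false, [⟨-41430123, 55207923⟩]), (false, []),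
    (false, [⟨6894942, 78995863⟩, ⟨-76039963, 0⟩]), (true, [⟨-22200582, 73376320⟩]),
    (false, [⟨0, 74693403⟩]), (false, [⟨-67221601, 0⟩, ⟨-30357506, 79036705⟩]),
    (false, [⟨-14779887, 72238806⟩]), (false, [⟨-10865270, 77355021⟩, ⟨-72913186, 0⟩]),
    (false, [⟨21727236, 77490694⟩, ⟨-63273068, 58836528⟩]),
    (false, [⟨-65225539, 42074549⟩, ⟨11619593, 83252459⟩]), (false, [])]
  | _ => []

/-- Approximate roots for the lists `candidates [-1, -1] 9`: the degree `12` is divided into four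
cases according to the coefficients of `X` and `X ^ 2`, to keep the evaluations small. -/
def witnessesNegNeg : List (Bool × List ℤ[i]) := [
  (false, [⟨96591718, 0⟩]), (false, [⟨96336366, 0⟩]), (false, [⟨96051295, 0⟩]),
  (false, [⟨95734502, 0⟩]), (false, [⟨95385311, 0⟩]), (false, [⟨95005183, 0⟩]),
  (false, [⟨89396452, 0⟩]), (false, [⟨96025200, 0⟩]), (false, [⟨95685844, 0⟩]),
  (false, [⟨95304817, 0⟩]), (false, [⟨94881245, 0⟩]), (false, [⟨94417757, 0⟩]),
  (false, [⟨88426662, 0⟩]), (false, [⟨95262445, 0⟩]), (false, [⟨94800937, 0⟩]),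
  (false, [⟨94283833, 0⟩]), (false, [⟨93716269, 0⟩]), (false, [⟨87387192, 0⟩]),
  (false, [⟨94212157, 0⟩]), (false, [⟨93580111, 0⟩]), (false, [⟨92887371, 0⟩]),
  (false, [⟨86317338, 0⟩]), (false, [⟨92765494, 0⟩]), (false, [⟨91932678, 0⟩]),
  (false, [⟨85270895, 0⟩]), (false, [⟨90881374, 0⟩]), (false, [⟨84302565, 0⟩]),
  (false, [⟨83452067, 0⟩]), (false, [⟨79968005, 0⟩]), (false, [⟨95632462, 0⟩]),
  (false, [⟨95213868, 0⟩]), (false, [⟨94736209, 0⟩]), (false, [⟨94197666, 0⟩]),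
  (false, [⟨93602716, 0⟩]), (false, [⟨87010691, 0⟩]), (false, [⟨94675162, 0⟩]),
  (false, [⟨94077936, 0⟩]), (false, [⟨93396698, 0⟩]), (false, [⟨92640785, 0⟩]),
  (false, [⟨85602507, 0⟩]), (false, [⟨93283746, 0⟩]), (false, [⟨57593240, 0⟩]),
  (false, [⟨91460042, 0⟩]), (false, [⟨84116391, 0⟩]), (false, [⟨91248548, 0⟩]),
  (false, [⟨90060738, 0⟩]), (false, [⟨82649229, 0⟩]), (false, [⟨88512043, 0⟩]),
  (false, [⟨81306719, 0⟩]), (false, [⟨80162692, 0⟩]), (false, [⟨76357280, 0⟩]),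
  (false, [⟨93938889, 0⟩]), (false, [⟨93143636, 0⟩]), (false, [⟨92216498, 0⟩]),
  (false, [⟨91176968, 0⟩]), (false, [⟨83368206, 0⟩]), (false, [⟨92026479, 0⟩]),
  (false, [⟨60291499, 0⟩]), (false, [⟨89401343, 0⟩]), (false, [⟨81212684, 0⟩]),
  (false, [⟨88997981, 0⟩]), (false, [⟨87221721, 0⟩]), (false, [⟨79020784, 0⟩]),
  (false, [⟨84827190, 0⟩]), (false, [⟨76992471, 0⟩]), (false, [⟨75269414, 0⟩]),
  (false, [⟨70039953, 0⟩]), (false, [⟨90262359, 0⟩]), (false, [⟨88392399, 0⟩]),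
  (false, [⟨86322812, 0⟩]), (false, [⟨77262726, 0⟩]), (false, [⟨85472431, 0⟩]),
  (false, [⟨64598258, 0⟩]), (false, [⟨73104173, 0⟩]), (false, [⟨66062788, 0⟩]),
  (false, [⟨69201186, 3541469⟩]), (false, [⟨68586250, 5155979⟩]), (false, [⟨67038135, 6727421⟩]),
  (false, [⟨79768638, 0⟩]), (false, [⟨69841348, 0⟩]), (false, [⟨69029134, 6169896⟩]),
  (false, [⟨70831351, 5634262⟩]), (false, [⟨68222157, 7666258⟩]), (false, [⟨67601090, 8380846⟩]),
  (false, [⟨66268055, 8954802⟩]), (false, [⟨69268154, 8702982⟩]), (false, [⟨67264605, 9342960⟩]),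
  (false, [⟨66682029, 9808704⟩]), (false, [⟨65553082, 10045806⟩]), (false, [⟨65975150, 10468536⟩]),
  (false, [⟨64996678, 10571882⟩]), (false, [⟨64603799, 10810720⟩]), (false, [⟨63896808, 10860756⟩]),
  (false, [⟨95109816, 0⟩]), (false, [⟨94562610, 0⟩]), (false, [⟨93919248, 0⟩]),
  (false, [⟨93172436, 0⟩]), (false, [⟨92327595, 0⟩]), (false, [⟨84466908, 0⟩]),
  (false, [⟨93820160, 0⟩]), (false, [⟨92964728, 0⟩]), (false, [⟨91945330, 0⟩]),
  (false, [⟨90772890, 0⟩]), (false, [⟨81836431, 0⟩]), (false, [⟨91723519, 0⟩]),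
  (false, [⟨90290813, 0⟩]), (false, [⟨88618672, 0⟩]), (false, [⟨78199011, 0⟩]),
  (false, [⟨88059405, 0⟩]), (false, [⟨85651368, 0⟩]), (false, [⟨72995868, 3535764⟩]),
  (false, [⟨81696472, 0⟩]), (false, [⟨72351551, 6156654⟩]), (false, [⟨71735354, 7411207⟩]),
  (false, [⟨69839974, 8765124⟩]), (false, [⟨92708194, 0⟩]), (false, [⟨91421831, 0⟩]),
  (false, [⟨89776527, 0⟩]), (false, [⟨87750248, 0⟩]), (false, [⟨74436751, 4190530⟩]),
  (false, [⟨89256777, 0⟩]), (false, [⟨86326697, 0⟩]), (false, [⟨81487458, 0⟩]),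
  (false, [⟨74069391, 8477637⟩]), (false, [⟨79156233, 4359295⟩]), (false, [⟨78020854, 8063333⟩]),
  (false, [⟨73358175, 10771933⟩]), (false, [⟨76558521, 11157731⟩]), (false, [⟨72502619, 12102428⟩]),
  (false, [⟨71716784, 12793141⟩]), (false, [⟨69853652, 12923789⟩]), (false, [⟨80977922, 1256212⟩]),
  (false, [⟨80430363, 8024875⟩]), (false, [⟨79181862, 11053636⟩]), (false, [⟨73932248, 12722116⟩]),
  (false, [⟨79586468, 13090410⟩]), (false, [⟨77467466, 15220703⟩]), (false, [⟨72923084, 14695759⟩]),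
  (false, [⟨75029406, 17076769⟩]), (false, [⟨71786655, 15732688⟩]), (false, [⟨70853857, 16125154⟩]),
  (false, [⟨69238429, 15578982⟩]), (false, [⟨77396970, 19441352⟩]), (false, [⟨74515400, 19631667⟩]),
  (false, [⟨71654735, 17307733⟩]), (false, [⟨72068404, 19965682⟩]), (false, [⟨70335345, 17961642⟩]),
  (false, [⟨69414483, 18054846⟩]), (false, [⟨68218033, 17182453⟩]), (false, [⟨68822707, 18884899⟩]),
  (false, [⟨68040486, 18814624⟩]), (false, [⟨67189087, 17921931⟩]), (false, [⟨67080358, 18941765⟩]),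
  (false, [⟨66412861, 18133540⟩]), (false, [⟨65909469, 18110047⟩]), (false, [⟨65338056, 17569044⟩]),
  (false, [⟨90612569, 0⟩]), (false, [⟨87571152, 0⟩]), (false, [⟨82555926, 4635874⟩]),
  (false, [⟨82059481, 8273613⟩]), (false, [⟨76558331, 12140249⟩]), (false, [⟨83479047, 6707852⟩]),
  (false, [⟨83420199, 10547944⟩]), (false, [⟨82589177, 13503123⟩]), (false, [⟨76365143, 15024254⟩]),
  (false, [⟨83642285, 15058853⟩]), (false, [⟨81800928, 18197385⟩]), (false, [⟨75553165, 17208115⟩]),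
  (false, [⟨78784232, 21274321⟩]), (false, [⟨74317039, 18540903⟩]), (false, [⟨73133419, 19054842⟩]),
  (false, [⟨71148051, 18064130⟩]), (false, [⟨85729118, 12211666⟩]), (true, [⟨-54485673, 0⟩]),
  (true, [⟨29780179, 62647341⟩]), (false, [⟨76829012, 18998650⟩]), (true, [⟨-59177609, 27042583⟩]),
  (false, [⟨82297548, 29802652⟩, ⟨-75404233, 32008395⟩]), (false, [⟨75550349, 21610082⟩]),
  (false, [⟨74527340, 28200427⟩]), (false, [⟨73526561, 22865195⟩]), (false, [⟨71949918, 22879583⟩]),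
  (false, [⟨70488038, 21016502⟩]), (false, [⟨70180961, 33729473⟩]), (false, [⟨70921852, 30959521⟩]),
  (false, [⟨73417562, 25683357⟩]), (false, [⟨70700258, 25659031⟩]), (false, [⟨69434073, 24934153⟩]),
  (false, [⟨68960825, 22917406⟩]), (false, [⟨68128554, 25790536⟩]), (false, [⟨67369070, 25063701⟩]),
  (false, [⟨67352449, 23502785⟩]), (false, [⟨66270685, 24605638⟩]), (false, [⟨66301445, 23368077⟩]),
  (false, [⟨65736530, 23055678⟩]), (false, [⟨65509589, 22121141⟩]), (false, [⟨60649395, 39663447⟩]),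
  (false, [⟨62384187, 39422503⟩]), (false, [⟨64057741, 39971630⟩]), (false, [⟨62766501, 42504962⟩]),
  (false, [⟨63907691, 37035480⟩]), (false, [⟨65663698, 36484339⟩]), (true, [⟨-42974341, 49030461⟩]),
  (true, [⟨-58501159, 0⟩]), (false, [⟨70321696, 29953853⟩]), (false, [⟨70543742, 26202699⟩]),
  (false, [⟨62733381, 33867840⟩]), (false, [⟨63565714, 33154291⟩]), (false, [⟨65612634, 34075124⟩]),
  (false, [⟨65666626, 31575802⟩]), (false, [⟨65761313, 30117027⟩]), (false, [⟨67394254, 28391313⟩]),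
  (false, [⟨64064674, 29804274⟩]), (false, [⟨64052329, 28882468⟩]), (false, [⟨65110444, 27898230⟩]),
  (false, [⟨63444746, 27940927⟩]), (false, [⟨64186416, 27102745⟩]), (false, [⟨63845988, 26487430⟩]),
  (false, [⟨64193537, 25542735⟩]), (false, [⟨59864585, 32152391⟩]), (false, [⟨60326090, 31750778⟩]),
  (false, [⟨61219256, 32108946⟩]), (false, [⟨61423262, 30997029⟩]), (false, [⟨61742899, 30323694⟩]),
  (false, [⟨62928954, 30103747⟩]), (false, [⟨60774313, 29736804⟩]), (false, [⟨60943877, 29186551⟩]),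
  (false, [⟨61760484, 28907846⟩]), (false, [⟨61392039, 28085820⟩]), (false, [⟨61340888, 27547866⟩]),
  (false, [⟨61889500, 27011548⟩]), (false, [⟨59372495, 28845989⟩]), (false, [⟨59495359, 28444721⟩]),
  (false, [⟨60056817, 28260274⟩]), (false, [⟨59832620, 27635055⟩]), (false, [⟨59833639, 27230070⟩]),
  (false, [⟨60275446, 26890298⟩]), (false, [⟨59177609, 27042583⟩]), (false, [⟨59168431, 26703143⟩]),
  (false, [⟨59521936, 26413887⟩]), (false, [⟨58928772, 26275050⟩]), (false, [⟨59229801, 25994250⟩]),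
  (false, [⟨59156498, 25695676⟩]), (false, [⟨59402465, 25371780⟩])]

/-- Approximate roots for the lists `candidates [-1, 1] 9`. -/
def witnessesNegPos : List (Bool × List ℤ[i]) := [
  (false, [⟨94348167, 0⟩]), (false, [⟨93545386, 0⟩]), (false, [⟨92526068, 0⟩]),
  (false, [⟨91221174, 0⟩]), (false, [⟨89551852, 0⟩]), (false, [⟨78420904, 6515990⟩]),
  (false, [⟨92312131, 0⟩]), (false, [⟨90656834, 0⟩]), (false, [⟨88020543, 0⟩]),
  (false, [⟨83492348, 3359642⟩]), (false, [⟨78830576, 9845651⟩]), (false, [⟨86341416, 0⟩]),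
  (false, [⟨84335662, 5872551⟩]), (false, [⟨83999218, 8594553⟩]), (false, [⟨78865610, 12164284⟩]),
  (false, [⟨84574517, 9613762⟩]), (false, [⟨83972207, 11994951⟩]), (false, [⟨78539257, 13938306⟩]),
  (false, [⟨77921627, 15223800⟩]), (false, [⟨77175157, 16023502⟩]), (false, [⟨74805853, 15923959⟩]),
  (false, [⟨89738722, 0⟩]), (false, [⟨85391394, 3783150⟩]), (false, [⟨85563219, 7312214⟩]),
  (false, [⟨85374547, 9743413⟩]), (false, [⟨79976270, 13170555⟩]), (false, [⟨86319013, 8187667⟩]),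
  (false, [⟨86552400, 10909239⟩]), (false, [⟨86255059, 13334581⟩, ⟨-761375, 79414945⟩]),
  (false, [⟨80120830, 15383992⟩]), (false, [⟨87185097, 14110308⟩, ⟨-17398572, 80422076⟩]),
  (true, [⟨63522013, 49878967⟩, ⟨-35224848, 78015013⟩]), (false, [⟨79798694, 17252376⟩]),
  (false, [⟨79032987, 18669015⟩]), (false, [⟨78047184, 19495023⟩]), (false, [⟨75504000, 18709042⟩]),
  (false, [⟨2319941, 72649094⟩]), (true, [⟨-53461069, 0⟩]), (true, [⟨25155706, 64967241⟩]),
  (false, [⟨80905884, 18140821⟩]), (true, [⟨-62928954, 30103747⟩]), (false, [⟨-388341, 75157453⟩]),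
  (false, [⟨80515386, 20273268⟩]), (false, [⟨79445551, 21905738⟩]), (false, [⟨78075614, 22687771⟩]),
  (false, [⟨75569913, 21095438⟩]), (false, [⟨7123419, 73859922⟩]), (false, [⟨5151390, 73068977⟩]),
  (false, [⟨6126465, 72527648⟩]), (true, [⟨-51100114, 0⟩]), (false, [⟨76907653, 25434162⟩]),
  (false, [⟨74946924, 23066642⟩]), (false, [⟨76541546, 27134926⟩]), (false, [⟨74839310, 26833713⟩]),
  (false, [⟨73774783, 24323641⟩]), (false, [⟨72562349, 24746479⟩]), (false, [⟨71685130, 24657918⟩]),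
  (false, [⟨70965873, 23348392⟩]), (false, [⟨87409800, 6344868⟩]), (false, [⟨88132044, 9009052⟩]),
  (false, [⟨88617188, 11294501⟩, ⟨44881033, 67848549⟩]), (true, [⟨37762686, 52454320⟩]),
  (false, [⟨82334961, 16146810⟩]), (true, [⟨-29724214, 59379488⟩]), (true, [⟨-50874408, 0⟩]),
  (true, [⟨41001621, 62244487⟩]), (false, [⟨82795383, 18271084⟩]), (true, [⟨-71148051, 18064130⟩]),
  (true, [⟨-20762662, 76929940⟩, ⟨60782038, 56383984⟩]), (true, [⟨-36769959, 53982223⟩]),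
  (true, [⟨-56047740, 0⟩]), (true, [⟨42528434, 49297473⟩]), (false, [⟨77673200, 21756174⟩]),
  (true, [⟨-26526168, 74685937⟩, ⟨-72847377, 37912375⟩]), (true, [⟨-55021518, 0⟩]),
  (true, [⟨29464967, 64632575⟩]), (true, [⟨-4122972, 77171590⟩, ⟨-70965873, 23348392⟩]),
  (true, [⟨-59402465, 25371780⟩]), (false, []), (true, [⟨-49579204, 50347083⟩]),
  (true, [⟨-63896808, 10860756⟩]), (true, [⟨41789413, 55120731⟩]), (false, [⟨78172351, 24290395⟩]),
  (true, [⟨-69839974, 8765124⟩]), (true, [⟨-27173267, 63088123⟩]), (true, [⟨-51957281, 0⟩]),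
  (false, [⟨-50471620, 66990710⟩, ⟨80677739, 31075899⟩]), (true, [⟨-14701922, 73283083⟩]),
  (true, [⟨-65509589, 22121141⟩]), (true, [⟨65337549, 43292762⟩]), (true, [⟨-39762322, 58347744⟩]),
  (true, [⟨-59370834, 0⟩]), (false, [⟨73304380, 29099639⟩]), (false, [⟨72730559, 26998990⟩]),
  (true, [⟨-39885887, 59433891⟩]), (true, [⟨-52448506, 0⟩]), (true, [⟨28920539, 59825935⟩]),
  (false, [⟨53796293, 54314162⟩]), (false, [⟨-20869804, 73661859⟩]),
  (true, [⟨-41538416, 49402462⟩]), (true, [⟨-59769439, 0⟩]), (true, [⟨37155058, 55003566⟩]),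
  (false, [⟨80246508, 27218121⟩, ⟨-19095789, 75954576⟩]), (true, [⟨-60445716, 0⟩]),
  (true, [⟨-32254853, 58456393⟩]), (true, [⟨-50410225, 0⟩]), (true, [⟨33885303, 66887259⟩]),
  (false, [⟨80482119, 30291408⟩, ⟨59710798, 57903772⟩]),
  (false, [⟨-24895824, 73730964⟩, ⟨69443669, 48040183⟩]),
  (false, [⟨74477603, 43413489⟩, ⟨-27793047, 76538132⟩]), (true, [⟨-37199958, 51862150⟩]),
  (true, [⟨-54902450, 0⟩]), (true, [⟨44840362, 51598081⟩]), (false, [⟨73627121, 30654831⟩]),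
  (false, [⟨59076703, 44790609⟩]), (false, [⟨59390867, 46895074⟩]), (true, [⟨-53936766, 0⟩]),
  (true, [⟨26067051, 62835184⟩]), (true, [⟨1270710, 74289453⟩]), (true, [⟨-61889500, 27011548⟩]),
  (true, [⟨-45499048, 48946462⟩]), (true, [⟨-67038135, 6727421⟩]), (true, [⟨39736951, 61812487⟩]),
  (false, [⟨73099654, 34787271⟩, ⟨-12547640, 79571177⟩]), (false, [⟨61827686, 40797311⟩]),
  (true, [⟨-31578398, 64111032⟩]), (true, [⟨-51369871, 0⟩]), (false, [⟨65901946, 38185037⟩]),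
  (false, [⟨69080196, 37718596⟩]), (false, [⟨63935227, 37506164⟩]), (false, [⟨64352644, 36498057⟩]),
  (false, [⟨66158702, 36317570⟩]), (false, [⟨65328812, 34928851⟩]), (false, [⟨65191792, 33981870⟩]),
  (false, [⟨66297323, 33096488⟩]), (false, [⟨34264031, 59196841⟩]), (false, [⟨32160183, 59857429⟩]),
  (false, [⟨31509557, 58782911⟩]), (false, [⟨31827502, 58173377⟩]), (false, [⟨32254853, 58456393⟩]),
  (false, [⟨29707506, 62647549⟩]), (false, [⟨29816846, 60967305⟩]), (false, [⟨30592125, 60428286⟩]),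
  (false, [⟨30940612, 61096604⟩]), (false, [⟨28271036, 60056755⟩]), (false, [⟨29003142, 60352442⟩]),
  (false, [⟨29011729, 59289145⟩]), (false, [⟨29533036, 58950078⟩]), (false, [⟨29724214, 59379488⟩]),
  (true, [⟨-19592501, 71807973⟩]), (true, [⟨-54097345, 0⟩]), (false, [⟨33956366, 66558393⟩]),
  (true, [⟨-6126465, 72527648⟩]), (false, [⟨27881731, 64570252⟩]), (true, [⟨-47623833, 46504012⟩]),
  (false, [⟨29837124, 63607269⟩]), (false, [⟨31121043, 62932666⟩]), (false, [⟨31578398, 64111032⟩]),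
  (false, [⟨24346223, 64204170⟩]), (false, [⟨24345868, 65313569⟩]), (false, [⟨25934118, 64487673⟩]),
  (false, [⟨27220847, 65031131⟩]), (false, [⟨26379172, 65909488⟩]), (false, [⟨25286199, 62510263⟩]),
  (false, [⟨25633723, 63335435⟩]), (false, [⟨26527080, 62326013⟩]), (false, [⟨27426262, 62408580⟩]),
  (false, [⟨27173267, 63088123⟩]), (false, [⟨44767103, 56865002⟩]), (true, [⟨-51951491, 0⟩]),
  (false, [⟨42439993, 57373662⟩]), (true, [⟨-60649395, 39663447⟩]), (true, [⟨-42310703, 47614297⟩]),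
  (true, [⟨-57815274, 0⟩]), (true, [⟨37951033, 53668854⟩]), (false, [⟨39885887, 59433891⟩]),
  (true, [⟨-58828008, 0⟩]), (true, [⟨-34903995, 61275306⟩]), (true, [⟨-50093240, 0⟩]),
  (false, [⟨40568834, 65702210⟩, ⟨-88391831, 0⟩]), (true, [⟨-66193279, 0⟩, ⟨-13528785, 79050712⟩]),
  (true, [⟨-57919224, 48161649⟩, ⟨-69602036, 0⟩]), (true, [⟨-38968676, 51144460⟩]),
  (true, [⟨-54139069, 0⟩]), (true, [⟨43650309, 50155422⟩]), (false, [⟨36767166, 64648528⟩]),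
  (false, [⟨53211881, 53159514⟩]), (false, [⟨51427305, 54674641⟩]), (true, [⟨-53232033, 0⟩]),
  (true, [⟨-2319941, 72649094⟩]), (true, [⟨-61219256, 32108946⟩]), (true, [⟨-45175930, 46370652⟩]),
  (true, [⟨-61981843, 0⟩, ⟨-90262359, 0⟩]), (true, [⟨42589532, 57564521⟩]),
  (true, [⟨-59390867, 46895074⟩]), (false, [⟨21143071, 70809128⟩]), (true, [⟨-25813161, 70309478⟩]),
  (true, [⟨-50970239, 0⟩]), (false, []), (true, [⟨-9674052, 72629745⟩]),
  (false, [⟨24213007, 69503087⟩]), (true, [⟨-42842711, 51840838⟩]), (true, [⟨-55937590, 0⟩]),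
  (true, [⟨48421989, 47918929⟩]), (false, [⟨72847377, 37912375⟩, ⟨26526168, 74685937⟩]),
  (false, [⟨38968676, 51144460⟩]), (false, [⟨38404199, 51559068⟩]), (false, [⟨38150329, 51097302⟩]),
  (false, [⟨38201645, 52754803⟩]), (false, [⟨37997998, 52144173⟩]), (false, [⟨37304977, 52382007⟩]),
  (false, [⟨36977789, 52092995⟩]), (false, [⟨37199958, 51862150⟩]), (false, [⟨39964526, 54649870⟩]),
  (false, [⟨39506162, 53659619⟩]), (false, [⟨38464037, 54110590⟩]), (false, [⟨38291264, 53313399⟩]),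
  (false, [⟨37542842, 55727307⟩]), (false, [⟨37687143, 54737361⟩]), (false, [⟨36631679, 54693419⟩]),
  (false, [⟨36369079, 54157870⟩]), (false, [⟨36769959, 53982223⟩]), (false, [⟨43867475, 52120624⟩]),
  (false, [⟨42842711, 51840838⟩]), (false, [⟨42368035, 52942786⟩]), (false, [⟨41558723, 52355629⟩]),
  (false, [⟨43210870, 55253966⟩]), (false, [⟨42025839, 54151377⟩]), (false, [⟨40795099, 55160326⟩]),
  (false, [⟨39924010, 54682647⟩]), (false, [⟨40310793, 54080275⟩]), (false, [⟨48451731, 54557111⟩]),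
  (false, [⟨45941075, 54861441⟩]), (true, [⟨-51790962, 0⟩]), (false, [⟨43151464, 56053012⟩]),
  (true, [⟨-67352449, 23502785⟩]), (false, [⟨43268032, 61082589⟩]), (true, [⟨-58473045, 0⟩]),
  (false, [⟨38512720, 58659232⟩]), (false, [⟨39762322, 58347744⟩]), (false, [⟨42812758, 47599747⟩]),
  (false, [⟨42310703, 47614297⟩]), (false, [⟨42250467, 48208331⟩]), (false, [⟨41747580, 48124334⟩]),
  (false, [⟨42974341, 49030461⟩]), (false, [⟨42332829, 48927903⟩]), (false, [⟨42117692, 49649211⟩]),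
  (false, [⟨41538416, 49402462⟩]), (false, [⟨44938493, 48663084⟩]), (false, [⟨44162532, 48823834⟩]),
  (false, [⟨44205401, 49755224⟩]), (false, [⟨43365647, 49677946⟩]), (false, [⟨45637527, 50902184⟩]),
  (false, [⟨44390229, 50871983⟩]), (false, [⟨44057677, 52230578⟩]), (false, [⟨43068181, 52433679⟩]),
  (false, [⟨42995737, 51675973⟩]), (false, [⟨45647363, 46025783⟩]), (false, [⟨45175930, 46370652⟩]),
  (false, [⟨45494447, 46986285⟩]), (false, [⟨44893213, 47270956⟩]), (false, [⟨46717579, 47257186⟩]),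
  (false, [⟨46025478, 47730255⟩]), (false, [⟨46443185, 48640626⟩]), (false, [⟨45499048, 48946462⟩]),
  (false, [⟨48053218, 45818296⟩]), (false, [⟨47623833, 46504012⟩]), (false, [⟨48362762, 47128618⟩]),
  (false, [⟨47646845, 47902555⟩]), (false, [⟨49986062, 46703956⟩]), (false, [⟨49475413, 47883199⟩]),
  (false, [⟨50893088, 48700685⟩]), (false, [⟨51428411, 50316207⟩]), (false, [⟨49579204, 50347083⟩])]

/-- Approximate roots for the lists `candidates [1, -1] 9`. -/
def witnessesPosNeg : List (Bool × List ℤ[i]) := [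
  (false, [⟨92985167, 0⟩]), (false, [⟨91243344, 0⟩]), (false, [⟨87471178, 2518378⟩]),
  (false, [⟨87700819, 5522910⟩]), (false, [⟨83207862, 11602362⟩]), (false, [⟨87973635, 3679477⟩]),
  (false, [⟨88460386, 6381964⟩]), (false, [⟨88769833, 8353411⟩]), (false, [⟨83778123, 13352577⟩]),
  (false, [⟨89294549, 8699091⟩]), (true, [⟨-51524348, 0⟩]), (false, [⟨84066022, 14909380⟩]),
  (true, [⟨-69363796, 28643240⟩]), (false, [⟨84046571, 16324778⟩, ⟨-70853857, 16125154⟩]),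
  (true, [⟨-57403804, 0⟩]), (false, [⟨80213732, 18144061⟩]), (false, [⟨89343960, 7008030⟩]),
  (true, [⟨-42452782, 48509502⟩]), (false, [⟨-61017705, 0⟩]), (false, [⟨-61548168, 0⟩]),
  (false, [⟨-59163742, 0⟩]), (false, [⟨-58396243, 0⟩]), (false, [⟨-58661620, 0⟩]),
  (false, [⟨-59790203, 0⟩]), (false, [⟨-60183216, 0⟩]), (false, [⟨-59215948, 0⟩]),
  (false, [⟨81071791, 19954296⟩]), (false, [⟨-66832072, 0⟩, ⟨92668867, 12495612⟩, ⟨-88618672, 0⟩]),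
  (true, [⟨-53272814, 0⟩]), (true, [⟨1011492, 72431195⟩]), (true, [⟨-60518366, 30871722⟩]),
  (true, [⟨-45952559, 47098112⟩]), (false, [⟨-66365732, 0⟩, ⟨85930798, 21877759⟩]),
  (false, [⟨81504585, 21682087⟩, ⟨-68758279, 0⟩]), (false, []), (true, [⟨-30764814, 65936301⟩]),
  (false, [⟨-61075412, 0⟩]), (false, [⟨-61569172, 0⟩]),
  (false, [⟨-63753065, 0⟩, ⟨85619315, 27015652⟩]), (true, [⟨-42385129, 53790311⟩]),
  (true, [⟨-55985626, 0⟩]), (false, [⟨77469607, 24292688⟩]), (false, [⟨-63565714, 33154291⟩]),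
  (true, [⟨-44273818, 53310297⟩]), (false, [⟨-62831712, 30128147⟩]),
  (false, [⟨-64052329, 28882468⟩]), (true, [⟨-28898734, 58881190⟩]), (true, [⟨-50778427, 0⟩]),
  (false, [⟨-60857586, 38272634⟩]), (false, [⟨-66580435, 33874538⟩, ⟨25167777, 89833162⟩]),
  (true, [⟨-36153787, 54818748⟩]), (true, [⟨-55706997, 0⟩]),
  (false, [⟨82799477, 21665751⟩, ⟨-65663698, 36484339⟩]), (false, [⟨-59833639, 27230070⟩]),
  (true, [⟨-54716053, 0⟩]), (false, [⟨-59495359, 28444721⟩]), (false, [⟨-58928772, 26275050⟩]),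
  (false, [⟨-59156498, 25695676⟩]), (false, [⟨-58789587, 27254637⟩]),
  (false, [⟨-59168431, 26703143⟩]), (true, [⟨-26765467, 61804916⟩]), (true, [⟨-51825655, 0⟩]),
  (true, [⟨-18002207, 73226323⟩]), (false, [⟨-60731496, 28424018⟩]),
  (true, [⟨-37366728, 59995435⟩]), (true, [⟨-58529475, 0⟩]), (false, [⟨-60943877, 29186551⟩]),
  (true, [⟨-37945678, 61654462⟩]), (true, [⟨-52305122, 0⟩]), (true, [⟨8726024, 74559242⟩]),
  (true, [⟨-42261761, 50098243⟩]), (true, [⟨-58961611, 0⟩]),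
  (false, [⟨85018813, 25115615⟩, ⟨-81800928, 18197385⟩]), (true, [⟨-31156653, 58427555⟩]),
  (true, [⟨-50327063, 0⟩]), (true, [⟨-67854978, 0⟩, ⟨9549254, 82832182⟩]),
  (false, [⟨-63961047, 60812860⟩, ⟨-74346261, 0⟩]), (true, [⟨-37033250, 52626460⟩]),
  (true, [⟨-54656738, 0⟩]), (false, [⟨80233831, 28483864⟩, ⟨-72884686, 0⟩]),
  (false, [⟨-69434073, 24934153⟩]), (true, [⟨-53717664, 0⟩]), (true, [⟨3422492, 73836175⟩]),
  (true, [⟨-47179850, 48885006⟩]), (false, [⟨-67145326, 27519561⟩]),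
  (false, [⟨-67369070, 25063701⟩]), (true, [⟨-29780179, 62647341⟩]), (true, [⟨-51260139, 0⟩]),
  (false, [⟨-66260014, 41817258⟩, ⟨80149961, 33273557⟩]),
  (false, [⟨76846979, 40958668⟩, ⟨-74527340, 28200427⟩]), (true, [⟨-40171973, 55916134⟩]),
  (true, [⟨-56731932, 0⟩]), (false, [⟨75404233, 32008395⟩]), (false, [⟨-52531437, 0⟩]),
  (false, [⟨-53117601, 0⟩]), (false, [⟨-52795437, 0⟩]), (false, [⟨-52902998, 0⟩]),
  (false, [⟨-52068889, 0⟩]), (false, [⟨-51829467, 0⟩]), (false, [⟨-51909175, 0⟩]),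
  (false, [⟨-52398338, 0⟩]), (false, [⟨-52134576, 0⟩]), (false, [⟨-52222483, 0⟩]),
  (false, [⟨-54303355, 0⟩]), (false, [⟨-53871590, 0⟩]), (false, [⟨-54015989, 0⟩]),
  (false, [⟨-54909072, 0⟩]), (false, [⟨-54393406, 0⟩]), (false, [⟨-54565202, 0⟩]),
  (false, [⟨-53394037, 0⟩]), (false, [⟨-53057625, 0⟩]), (false, [⟨-53170214, 0⟩]),
  (false, [⟨-53857997, 0⟩]), (false, [⟨-53472844, 0⟩]), (false, [⟨-53601674, 0⟩]),
  (false, [⟨-50602572, 0⟩]), (false, [⟨-50487804, 0⟩]), (false, [⟨-50841665, 0⟩]),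
  (false, [⟨-50657726, 0⟩]), (false, [⟨-50718351, 0⟩]), (false, [⟨-50169727, 0⟩]),
  (false, [⟨-50018389, 0⟩]), (false, [⟨-50068033, 0⟩]), (false, [⟨-50382071, 0⟩]),
  (false, [⟨-50220700, 0⟩]), (false, [⟨-50273715, 0⟩]), (false, [⟨-51602060, 0⟩]),
  (false, [⟨-51452988, 0⟩]), (false, [⟨-51911553, 0⟩]), (false, [⟨-51666717, 0⟩]),
  (false, [⟨-51747931, 0⟩]), (false, [⟨-51065716, 0⟩]), (false, [⟨-50874123, 0⟩]),
  (false, [⟨-50937414, 0⟩]), (false, [⟨-51332136, 0⟩]), (false, [⟨-51124538, 0⟩]),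
  (false, [⟨-51193212, 0⟩]), (false, [⟨-60558237, 0⟩]), (false, [⟨-59565119, 0⟩]),
  (true, [⟨-46490917, 51617043⟩]), (false, [⟨-60609555, 0⟩]), (false, [⟨-61390852, 0⟩]),
  (false, [⟨-58201520, 0⟩]), (false, [⟨-57636609, 0⟩]), (false, [⟨-59440542, 0⟩]),
  (false, [⟨-58284173, 0⟩]), (false, [⟨-58665021, 0⟩]), (true, [⟨-25564096, 69189145⟩]),
  (true, [⟨-10392147, 80512209⟩, ⟨-75363043, 31830362⟩]), (true, [⟨-50634162, 46195685⟩]),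
  (false, [⟨-69268154, 8702982⟩]), (false, [⟨-66682029, 9808704⟩]), (true, [⟨-25631337, 62109101⟩]),
  (true, [⟨-16567450, 71046421⟩]), (true, [⟨-36862191, 62999500⟩]), (true, [⟨-57835966, 0⟩]),
  (false, [⟨-64598258, 0⟩, ⟨81890724, 35423160⟩]), (false, [⟨-55272810, 0⟩]),
  (false, [⟨-54960039, 0⟩]), (false, [⟨-55920640, 0⟩]), (false, [⟨-55546702, 0⟩]),
  (false, [⟨-54313811, 0⟩]), (false, [⟨-54069223, 0⟩]), (false, [⟨-54812975, 0⟩]),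
  (false, [⟨-54389472, 0⟩]), (false, [⟨-54532539, 0⟩]), (false, [⟨-57741149, 0⟩]),
  (false, [⟨-57174529, 0⟩]), (false, [⟨-59025986, 0⟩]), (false, [⟨-58220983, 0⟩]),
  (false, [⟨-56205682, 0⟩]), (false, [⟨-55822334, 0⟩]), (false, [⟨-57011013, 0⟩]),
  (false, [⟨-56293622, 0⟩]), (false, [⟨-56534195, 0⟩])]

/-- Approximate roots for the lists `candidates [1, 1] 9`. -/
def witnessesPosPos : List (Bool × List ℤ[i]) := [
  (true, [⟨761375, 79414945⟩, ⟨-86255059, 13334581⟩]), (false, [⟨-35212425, 63618226⟩]),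
  (false, [⟨-33885303, 66887259⟩]), (true, [⟨-30592125, 60428286⟩]),
  (true, [⟨-20978679, 80839415⟩, ⟨-70234393, 0⟩]), (true, [⟨-37951033, 53668854⟩]),
  (false, [⟨-41001621, 62244487⟩]), (false, []), (true, [⟨-2960133, 73128687⟩]),
  (true, [⟨-48421989, 47918929⟩]), (false, [⟨-25387178, 71549496⟩]),
  (true, [⟨-27220847, 65031131⟩]), (true, [⟨-11312403, 73171222⟩]), (true, [⟨-42589532, 57564521⟩]),
  (false, [⟨-60838427, 60663495⟩, ⟨84911724, 27334703⟩, ⟨-27788166, 84420305⟩]),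
  (false, [⟨-29663620, 61737213⟩]), (false, [⟨-29533036, 58950078⟩]),
  (false, [⟨-28920539, 59825935⟩]), (false, [⟨-33548700, 58996159⟩]),
  (false, [⟨-33767333, 60794408⟩]), (false, [⟨-31827502, 58173377⟩]),
  (false, [⟨-31674672, 59384200⟩]), (false, [⟨-25155706, 64967241⟩]),
  (true, [⟨-45301207, 47455852⟩]), (false, [⟨-26067051, 62835184⟩]),
  (false, [⟨-33956366, 66558393⟩]), (true, [⟨-6370516, 74713624⟩]),
  (false, [⟨-31121043, 62932666⟩]), (false, [⟨-29464967, 64632575⟩]),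
  (false, [⟨-44569765, 49172234⟩]), (false, [⟨-43068181, 52433679⟩]),
  (false, [⟨-44840362, 51598081⟩]), (false, [⟨-42519194, 47859416⟩]),
  (false, [⟨-41630772, 49788784⟩]), (false, [⟨-42528434, 49297473⟩]),
  (false, [⟨-48187527, 46384881⟩]), (false, [⟨-51428411, 50316207⟩]),
  (false, [⟨-50401888, 47520388⟩]), (false, [⟨-45559746, 46451811⟩]),
  (false, [⟨-46067374, 49338015⟩]), (false, [⟨-46592073, 47884458⟩]),
  (false, [⟨-39152937, 54210931⟩]), (false, [⟨-37155058, 55003566⟩]),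
  (false, [⟨-38861089, 51500457⟩]), (false, [⟨-36977789, 52092995⟩]),
  (false, [⟨-37762686, 52454320⟩]), (true, [⟨1961965, 73249024⟩]), (false, [⟨-39736951, 61812487⟩]),
  (false, [⟨-43060344, 52515635⟩]), (false, [⟨-39924010, 54682647⟩]),
  (false, [⟨-41789413, 55120731⟩]), (false, [⟨-5257845, 81802932⟩, ⟨-79467867, 0⟩]),
  (true, [⟨-63522013, 49878967⟩, ⟨35224848, 78015013⟩]),
  (false, [⟨2622154, 77462936⟩, ⟨-72357048, 0⟩]), (false, [⟨7885830, 78450077⟩, ⟨-77156241, 0⟩]),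
  (false, [⟨-5151390, 73068977⟩]), (true, [⟨-62913397, 40268379⟩]), (false, [⟨-1319168, 72414400⟩]),
  (false, [⟨388341, 75157453⟩]), (false, [⟨-21878017, 72680168⟩]),
  (false, [⟨-12095948, 84539374⟩, ⟨-65764022, 0⟩]),
  (false, [⟨-67415458, 0⟩, ⟨-27537250, 78696704⟩]), (false, [⟨-15148792, 71907509⟩]),
  (false, [⟨-8958902, 73704159⟩]), (false, [⟨-12195962, 77605798⟩, ⟨-73596391, 0⟩]),
  (false, [⟨-74477603, 43413489⟩, ⟨27793047, 76538132⟩]),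
  (false, [⟨20762662, 76929940⟩, ⟨-60782038, 56383984⟩]), (false, [⟨-64352644, 36498057⟩]),
  (false, [⟨-65337549, 43292762⟩, ⟨12814421, 81703540⟩]),
  (false, [⟨-46781307, 69082781⟩, ⟨-81584869, 0⟩, ⟨34438265, 85887690⟩]), (false, [])]

theorem isSettledBy_witnesses_of_lt_nine :
    ∀ n < 9, all₂ isSettledBy (candidates [] n) (witnesses n) := by decide +kernel

theorem isSettledBy_witnesses_nine :
    all₂ isSettledBy (candidates [] 9) (witnesses 9) := by decide +kernel

theorem isSettledBy_witnesses_ten :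
    all₂ isSettledBy (candidates [] 10) (witnesses 10) := by decide +kernel

theorem isSettledBy_witnessesNegNeg :
    all₂ isSettledBy (candidates [-1, -1] 9) witnessesNegNeg := by decide +kernel

theorem isSettledBy_witnessesNegPos :
    all₂ isSettledBy (candidates [-1, 1] 9) witnessesNegPos := by decide +kernel

theorem isSettledBy_witnessesPosNeg :
    all₂ isSettledBy (candidates [1, -1] 9) witnessesPosNeg := by decide +kernel

theorem isSettledBy_witnessesPosPos :
    all₂ isSettledBy (candidates [1, 1] 9) witnessesPosPos := by decide +kernel

theorem exists_isSettledBy {p : List ℤ} {n : ℕ} (hn : n ≤ 11) (hp : p ∈ candidates [] n) :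
    ∃ h, isSettledBy p h := by
  obtain hn | rfl | rfl | rfl : n < 9 ∨ n = 9 ∨ n = 10 ∨ n = 11 := by omega
  · exact exists_of_all₂ (isSettledBy_witnesses_of_lt_nine n hn) hp
  · exact exists_of_all₂ isSettledBy_witnesses_nine hp
  · exact exists_of_all₂ isSettledBy_witnesses_ten hp
  · rcases mem_candidates_succ.mp hp with hp | hp <;>
      rcases mem_candidates_succ.mp hp with hp | hp
    exacts [exists_of_all₂ isSettledBy_witnessesNegNeg hp,
      exists_of_all₂ isSettledBy_witnessesNegPos hp, exists_of_all₂ isSettledBy_witnessesPosNeg hp,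
      exists_of_all₂ isSettledBy_witnessesPosPos hp]

theorem mem_exceptional_or_of_signs {l : List ℤ} (hl : ∀ c ∈ l, c = 1 ∨ c = -1)
    (hlength : l.length ≤ 11) : 1 :: (l ++ [1]) ∈ exceptional ∨
      IsCyclotomicProduct (ofList (1 :: (l ++ [1]))) ∨
      NoNewmanMultiple (ofList (1 :: (l ++ [1]))) := by
  have hreverse : (1 :: (l ++ [1])).reverse = 1 :: (l.reverse ++ [1]) := by simp
  by_cases hsum : 0 < (1 :: (l ++ [1])).sum
  · rcases mem_candidates_or_reverse_mem hl hsum with hp | hp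
    · obtain ⟨h, hsettled⟩ := exists_isSettledBy hlength hp
      rcases mem_exceptional_or_of_isSettledBy hsettled with ⟨-, hspecial⟩ | hno
      exacts [or_assoc.mp (.inl hspecial), .inr (.inr hno)]
    · obtain ⟨h, hsettled⟩ := exists_isSettledBy hlength hp
      rw [hreverse] at hsettled
      rcases mem_exceptional_or_of_isSettledBy hsettled with ⟨hpal, hspecial⟩ | hno
      · rw [← hreverse, List.reverse_reverse] at hpal
        rw [← hreverse, ← hpal] at hspecial
        exact or_assoc.mp (.inl hspecial)
      · rw [← hreverse, ← reverse_ofList_append_one] at hno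
        exact .inr (.inr (noNewmanMultiple_of_reverse hno))
  · refine .inr (.inr (noNewmanMultiple_of_eval_nonpos (monic_ofList_append_one (1 :: l)) ?_
      zero_le_one ?_))
    · rw [natDegree_ofList_one_cons]
      simp
    · rw [eval_one_ofList]
      exact not_lt.mp hsum

theorem exists_eq_ofList {P : ℤ[X]} (hP : P.Monic) (hd : P.natDegree ≠ 0) (hL : IsLittlewood P)
    (h0 : P.coeff 0 = 1) : ∃ l : List ℤ, (∀ c ∈ l, c = 1 ∨ c = -1) ∧
      l.length + 1 = P.natDegree ∧ P = ofList (1 :: (l ++ [1])) := by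
  obtain ⟨m, hm⟩ := Nat.exists_eq_add_one_of_ne_zero hd
  refine ⟨(List.range m).map fun i => P.coeff (i + 1), fun c hc => ?_, by simp [hm], ?_⟩
  · obtain ⟨i, hi, rfl⟩ := List.mem_map.mp hc
    have := List.mem_range.mp hi
    exact hL.2 _ (by omega)
  · have hlead : P.coeff (m + 1) = 1 := hm ▸ hP
    conv_lhs => rw [eq_ofList P, hm, List.range_succ_eq_map, List.range_succ, List.map_cons,
      List.map_map, List.map_append, h0]
    simp [Function.comp_def, hlead]

theorem exists_mem_exceptional {P : ℤ[X]} (hP : P.Monic) (hd : P.natDegree ≤ 12)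
    (hL : IsLittlewood P) (hN : ∃ N, IsNewman N ∧ P ∣ N) (hC : ¬ IsCyclotomicProduct P) :
    ∃ p ∈ exceptional, ofList p = P := by
  obtain ⟨N, hN, hdvd⟩ := hN
  have hd0 : P.natDegree ≠ 0 := fun hd0 =>
    hC ⟨[], by simp, by simpa using hP.natDegree_eq_zero.mp hd0⟩
  rcases hL.2 0 (Nat.zero_le _) with h0 | h0
  · obtain ⟨l, hl, hlength, rfl⟩ := exists_eq_ofList hP hd0 hL h0
    rcases mem_exceptional_or_of_signs hl (by omega) with h | h | h
    exacts [⟨_, h, rfl⟩, absurd h hC, absurd hdvd (h N hN)]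
  · refine absurd hdvd (noNewmanMultiple_of_eval_nonpos hP hd0 le_rfl ?_ N hN)
    rw [← coeff_zero_eq_eval_zero, h0]
    norm_num

theorem mem_map_exceptional_iff {P : ℤ[X]} : P ∈ exceptional.map ofList ↔
    P.Monic ∧ P.natDegree ≤ 12 ∧ IsLittlewood P ∧ (∃ N, IsNewman N ∧ P ∣ N) ∧
      ¬ IsCyclotomicProduct P := by
  rw [List.mem_map]
  constructor
  · rintro ⟨p, hp, rfl⟩
    exact properties_of_mem_exceptional hp
  · rintro ⟨hP, hd, hL, hN, hC⟩
    exact exists_mem_exceptional hP hd hL hN hC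

end Classification

end LittlewoodNewman

theorem monic_littlewood_deg_le_12_with_newman_multiple_classification
    (P : Polynomial ℤ) :
    (P.Monic ∧ P.natDegree ≤ 12 ∧ IsLittlewood P ∧
        (∃ N : Polynomial ℤ, IsNewman N ∧ P ∣ N) ∧ ¬ IsCyclotomicProduct P) ↔
      P ∈ ([X ^ 6 + X ^ 5 - X ^ 4 - X ^ 3 - X ^ 2 + X + 1,
        X ^ 7 + X ^ 6 - X ^ 5 + X ^ 4 + X ^ 3 - X ^ 2 + X + 1,
        X ^ 8 + X ^ 7 - X ^ 6 - X ^ 5 + X ^ 4 - X ^ 3 - X ^ 2 + X + 1,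
        X ^ 9 + X ^ 8 + X ^ 7 - X ^ 6 - X ^ 5 - X ^ 4 - X ^ 3 + X ^ 2 + X + 1,
        X ^ 10 - X ^ 9 + X ^ 8 + X ^ 7 - X ^ 6 + X ^ 5 - X ^ 4 + X ^ 3 + X ^ 2 - X + 1,
        X ^ 10 + X ^ 9 + X ^ 8 - X ^ 7 - X ^ 6 - X ^ 5 - X ^ 4 - X ^ 3 + X ^ 2 + X + 1,
        X ^ 12 + X ^ 11 - X ^ 10 - X ^ 9 - X ^ 8 + X ^ 7 + X ^ 6 + X ^ 5 - X ^ 4 - X ^ 3 - X ^ 2 + X + 1,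
        X ^ 12 - X ^ 11 + X ^ 10 + X ^ 9 - X ^ 8 + X ^ 7 + X ^ 6 + X ^ 5 - X ^ 4 + X ^ 3 + X ^ 2 - X + 1,
        X ^ 12 + X ^ 11 + X ^ 10 - X ^ 9 - X ^ 8 - X ^ 7 + X ^ 6 - X ^ 5 - X ^ 4 - X ^ 3 + X ^ 2 + X + 1]
        : List (Polynomial ℤ)) := by
  rw [← LittlewoodNewman.mem_map_exceptional_iff]
  refine iff_of_eq (congrArg (P ∈ ·) ?_)
  simp only [LittlewoodNewman.exceptional, LittlewoodNewman.ofList, List.map_cons, List.map_nil,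
    C_1, C_neg, List.cons.injEq, and_true]
  refine ⟨?_, ?_, ?_, ?_, ?_, ?_, ?_, ?_, ?_⟩ <;> ring
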